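/- arXiv:1806.05200 — 2 statements merged into one kernel-verified Lean document; each statement's English description precedes it below -/
import Mathlib

section
/- For n ≥ 3, the graded Betti number β_{2,4}(S/I) is strictly positive, where I = (y_i y_j − xz : 1 ≤ i < j ≤ n) is the join-meet ideal of the diamond lattice D_{n+2}; consequently I, which is generated in degree 2, is not linearly related. -/
open MvPolynomial

noncomputable def xP (K : Type*) [Field K] (n : ℕ) : MvPolynomial (Fin (n + 2)) K := X 0
noncomputable def zP (K : Type*) [Field K] (n : ℕ) : MvPolynomial (Fin (n + 2)) K :=
  X (Fin.last (n + 1))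
noncomputable def yP (K : Type*) [Field K] (n : ℕ) (i : Fin n) : MvPolynomial (Fin (n + 2)) K :=
  X i.succ.castSucc

/-- The join-meet ideal `I` of the diamond lattice `D_{n+2}`. -/
noncomputable def diamondIdeal (K : Type*) [Field K] (n : ℕ) :
    Ideal (MvPolynomial (Fin (n + 2)) K) :=
  Ideal.span {f | ∃ i j : Fin n, i < j ∧ f = yP K n i * yP K n j - xP K n * zP K n}

def mdeg {σ : Type*} (m : σ →₀ ℕ) : ℕ := m.sum fun _ e => e

/-- A minimal graded free resolution
`⋯ → F_{i+1} → F_i → ⋯ → F_0 → S/I → 0` of `S/I` over `S = K[x_s : s ∈ σ]`.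
`F_i` is free with finite homogeneous basis `B i`, the basis element `b : B i` having
degree `deg i b`; the differentials are graded and have entries in the graded maximal
ideal (minimality); `ε` is a lift of the augmentation `F_0 → S/I`. -/
structure MinGradedFreeRes (K : Type*) [Field K] (σ : Type*) (I : Ideal (MvPolynomial σ K)) where
  B : ℕ → Type
  finB : ∀ i, Finite (B i)
  deg : ∀ i, B i → ℕ
  d : ∀ i, ((B (i + 1)) →₀ MvPolynomial σ K) →ₗ[MvPolynomial σ K] ((B i) →₀ MvPolynomial σ K)
  ε : ((B 0) →₀ MvPolynomial σ K) →ₗ[MvPolynomial σ K] MvPolynomial σ K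
  ε_homog : ∀ b : B 0, (ε (Finsupp.single b 1)).IsHomogeneous (deg 0 b)
  surj : ∀ s : MvPolynomial σ K, ∃ t, ε t - s ∈ I
  exact0 : LinearMap.range (d 0) = Submodule.comap ε (I : Submodule _ _)
  exact : ∀ i, LinearMap.range (d (i + 1)) = LinearMap.ker (d i)
  homog : ∀ i (b : B (i + 1)) (c : B i),
    ∀ m ∈ ((d i (Finsupp.single b 1)) c).support, mdeg m + deg i c = deg (i + 1) b
  minimal : ∀ i (b : B (i + 1)) (c : B i), coeff 0 ((d i (Finsupp.single b 1)) c) = 0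

/-- The graded Betti number `β_{i,j}(S/I)` read off from a minimal graded free resolution:
the number of basis elements of `F_i` of degree `j`. -/
noncomputable def MinGradedFreeRes.betti {K : Type*} [Field K] {σ : Type*}
    {I : Ideal (MvPolynomial σ K)} (F : MinGradedFreeRes K σ I) (i j : ℕ) : ℕ :=
  Nat.card {b : F.B i // F.deg i b = j}

/-!
The proof compares the Koszul syzygy of two generators with the linear syzygies, by means of the
functional `φ` sending a quadric to its coefficient at `xz`. Modulo the prime ideal
`P_i = (y_j : j ≠ i)` every quadric `g ∈ I` equals `φ(g) xz`. So if `∑ l_k g_k = 0` with linear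
forms `l_k`, then `∑ φ(g_k) l_k` lies in every `P_i`; as `⋂ P_i` contains no nonzero linear form,
`φ ⊗ 1` kills all linear syzygies of `I`.
On the other hand, `φ ⊗ 1` sends the Koszul syzygy `f e' - f' e` of `f = y_1 y_2 - xz` and
`f' = y_1 y_3 - xz` to `φ(f') f - φ(f) f' = f' - f ≠ 0`. Hence this syzygy, of degree `4`, is not
generated in degree `3`, and `F_2` has a basis element of degree `4`.

A minimal graded free resolution exists because the generators of each successive syzygy module can
be chosen homogeneous and irredundant; by graded Nakayama the next syzygies then have entries in the
maximal ideal.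
-/

section Polynomial

variable {σ R : Type*} [CommSemiring R]

theorem isHomogeneous_iff_degree {p : MvPolynomial σ R} {n : ℕ} :
    p.IsHomogeneous n ↔ ∀ m, coeff m p ≠ 0 → m.degree = n := by
  simp only [IsHomogeneous, IsWeightedHomogeneous, Finsupp.degree_eq_weight_one]
  rfl

theorem homogeneousComponent_add_mul {a b : ℕ} {p q : MvPolynomial σ R}
    (hp : p ∈ idealOfVars σ R ^ a) (hq : q ∈ idealOfVars σ R ^ b) :
    homogeneousComponent (a + b) (p * q) =
      homogeneousComponent a p * homogeneousComponent b q := by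
  classical
  rw [mem_pow_idealOfVars_iff'] at hp hq
  ext m
  rw [coeff_homogeneousComponent, coeff_mul, coeff_mul,
    ← Finset.sum_const_zero (s := Finset.HasAntidiagonal.antidiagonal m), ← Finset.sum_ite_irrel]
  refine Finset.sum_congr rfl fun ⟨x, y⟩ hxy => ?_
  obtain rfl : x + y = m := Finset.HasAntidiagonal.mem_antidiagonal.1 hxy
  simp only [coeff_homogeneousComponent, map_add]
  have hx := hp x
  have hy := hq y
  grind

theorem mem_pow_idealOfVars_of_isHomogeneous {p : MvPolynomial σ R} {n : ℕ}
    (hp : p.IsHomogeneous n) : p ∈ idealOfVars σ R ^ n :=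
  (mem_pow_idealOfVars_iff' n p).2 fun m hm => by
    by_contra h
    exact hm.ne (isHomogeneous_iff_degree.1 hp m h)

theorem mem_idealOfVars_iff_coeff_zero {p : MvPolynomial σ R} :
    p ∈ idealOfVars σ R ↔ coeff 0 p = 0 := by
  rw [← pow_one (idealOfVars σ R), mem_pow_idealOfVars_iff']
  simp [Finsupp.degree_eq_zero_iff]

theorem homogeneousComponent_mem_span {s : Set (MvPolynomial σ R)} {d : ℕ}
    (hs : ∀ f ∈ s, f.IsHomogeneous d) {p : MvPolynomial σ R} (hp : p ∈ Ideal.span s) :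
    homogeneousComponent d p ∈ Submodule.span R s := by
  induction hp using Submodule.span_induction with
  | mem f hf => rw [homogeneousComponent_of_mem (hs f hf)]; simpa using Submodule.subset_span hf
  | zero => simp
  | add p q _ _ hp hq => rw [map_add]; exact add_mem hp hq
  | smul q p hp' hp =>
    have hpd : p ∈ idealOfVars σ R ^ d :=
      Ideal.span_le.2 (fun f hf => mem_pow_idealOfVars_of_isHomogeneous (hs f hf)) hp'
    have := homogeneousComponent_add_mul (a := 0) (p := q) (by simp) hpd
    rw [zero_add, homogeneousComponent_zero, ← smul_eq_C_mul] at this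
    rw [smul_eq_mul, this]
    exact Submodule.smul_mem _ _ hp

theorem mem_span_X_image_of_mul_monomial_mem {s : Set σ} {m : σ →₀ ℕ} (hm : ∀ i ∈ s, m i = 0)
    {p : MvPolynomial σ R} (hp : p * monomial m 1 ∈ Ideal.span (X '' s)) :
    p ∈ Ideal.span (X '' s) := by
  rw [mem_ideal_span_X_image] at hp ⊢
  intro a ha
  obtain ⟨i, hi, hai⟩ := hp (a + m) (by simpa [coeff_mul_monomial] using ha)
  exact ⟨i, hi, by simpa [hm i hi] using hai⟩

end Polynomial

section Span

variable {R M : Type*} [Semiring R] [AddCommMonoid M] [Module R M]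

theorem exists_fin_irredundant_span_eq {s : Set M} (hs : (Submodule.span R s).FG) :
    ∃ (k : ℕ) (g : Fin k → M), (∀ i, g i ∈ s) ∧
      Submodule.span R (Set.range g) = Submodule.span R s ∧
      ∀ i, g i ∉ Submodule.span R (g '' {i}ᶜ) := by
  classical
  obtain ⟨t₀, ht₀s, ht₀⟩ := (Submodule.fg_span_iff_fg_span_finset_subset s).1 hs
  obtain ⟨t, htt₀, ht, hmin⟩ := exists_minimal_le_of_wellFoundedLT
    (fun t : Finset M => Submodule.span R (t : Set M) = Submodule.span R s) t₀ ht₀.symm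
  let e := t.equivFin.symm
  have range_e : Set.range (fun i => (e i : M)) = t := by
    rw [Set.range_comp' Subtype.val e, e.range_eq_univ, Set.image_univ, Subtype.range_coe]
  refine ⟨t.card, fun i => e i, fun i => ht₀s (htt₀ (e i).2), by rw [range_e, ht], fun i hi => ?_⟩
  have hinj : Function.Injective fun i => (e i : M) := Subtype.val_injective.comp e.injective
  have himage : (fun i => (e i : M)) '' {i}ᶜ = (t.erase (e i) : Finset M) := by
    rw [Set.image_compl_eq_range_sdiff_image hinj, range_e, Set.image_singleton, Finset.coe_erase]
  rw [himage] at hi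
  refine (Finset.erase_ssubset (e i).2).not_ge (hmin ?_ (Finset.erase_subset _ _))
  beta_reduce
  rw [← ht, ← Submodule.span_insert_eq_span hi, ← Finset.coe_insert, Finset.insert_erase (e i).2]

end Span

section FreeGrading

variable {σ B R : Type*} [CommSemiring R]

variable (R) in
/-- The degree `j` part of the graded free module `⨁ b, S(-deg b)` over `S = R[x_s : s ∈ σ]`,
whose basis element `b` is placed in degree `deg b`. -/
def freeGrading (deg : B → ℕ) (j : ℕ) : Submodule R (B →₀ MvPolynomial σ R) where
  carrier := {v | ∀ c m, coeff m (v c) ≠ 0 → m.degree + deg c = j}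
  zero_mem' := by simp
  add_mem' {v w} hv hw c m h := by
    rcases ne_or_eq (coeff m (v c)) 0 with hvm | hvm
    · exact hv c m hvm
    · exact hw c m fun hwm => h (by simp [hvm, hwm])
  smul_mem' r v hv c m h := hv c m fun hvm => h (by simp [hvm])

variable {deg : B → ℕ} {j : ℕ} {v : B →₀ MvPolynomial σ R}

theorem single_mem_freeGrading {p : MvPolynomial σ R} {n : ℕ} (hp : p.IsHomogeneous n) (b : B) :
    Finsupp.single b p ∈ freeGrading R deg (n + deg b) := by
  classical
  intro c m h
  rw [Finsupp.single_apply] at h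
  split_ifs at h with hbc
  · rw [isHomogeneous_iff_degree.1 hp m h, hbc]
  · simp at h

theorem coeff_directSum_freeGrading (x : DirectSum ℕ fun j => freeGrading (σ := σ) R deg j)
    (j : ℕ) (c : B) (m : σ →₀ ℕ) :
    coeff m ((x j : B →₀ MvPolynomial σ R) c) = if m.degree + deg c = j then
      coeff m (DirectSum.coeAddMonoidHom (freeGrading R deg) x c) else 0 := by
  induction x using DirectSum.induction_on with
  | zero => simp
  | of i v =>
    have hv := v.2 c m
    rw [DirectSum.coeAddMonoidHom_of, DirectSum.coe_of_apply]
    split_ifs with hij hmc hmc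
    · rfl
    · by_contra h
      exact hmc ((hv h).trans hij)
    · by_contra h
      exact hij ((hv (Ne.symm h)).symm.trans hmc)
    · simp
  | add x y hx hy => simp [hx, hy, ite_add_ite]

noncomputable instance freeGrading.decomposition (deg : B → ℕ) :
    DirectSum.Decomposition (freeGrading (σ := σ) R deg) := by
  refine DirectSum.IsInternal.chooseDecomposition _ ⟨fun x y hxy => ?_, fun v => ?_⟩
  · ext j c m
    rw [coeff_directSum_freeGrading, coeff_directSum_freeGrading, hxy]
  · rw [← AddMonoidHom.mem_mrange]
    induction v using Finsupp.induction_linear with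
    | zero => exact zero_mem _
    | add v w hv hw => exact add_mem hv hw
    | single b p =>
      induction p using MvPolynomial.induction_on' with
      | monomial m a =>
        exact ⟨DirectSum.of (fun j => freeGrading R deg j) _
          ⟨_, single_mem_freeGrading (isHomogeneous_monomial a rfl) b⟩,
          DirectSum.coeAddMonoidHom_of _ _ _⟩
      | add p q hp hq => rw [Finsupp.single_add]; exact add_mem hp hq

theorem coeff_decompose_freeGrading (v : B →₀ MvPolynomial σ R) (j : ℕ) (c : B) (m : σ →₀ ℕ) :
    coeff m ((DirectSum.decompose (freeGrading R deg) v j : B →₀ MvPolynomial σ R) c) =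
      if m.degree + deg c = j then coeff m (v c) else 0 := by
  rw [coeff_directSum_freeGrading]
  congr 3
  exact (DirectSum.decompose _).symm_apply_apply v

instance freeGrading.gradedSMul :
    SetLike.GradedSMul (homogeneousSubmodule σ R) (freeGrading (σ := σ) R deg) where
  smul_mem {i j p v} hp hv c m h := by
    classical
    rw [Finsupp.smul_apply, smul_eq_mul, coeff_mul] at h
    obtain ⟨⟨a, b⟩, hab, hne⟩ := Finset.exists_ne_zero_of_sum_ne_zero h
    obtain rfl : a + b = m := Finset.HasAntidiagonal.mem_antidiagonal.1 hab
    have ha := isHomogeneous_iff_degree.1 hp a (left_ne_zero_of_mul hne)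
    have hb := hv c b (right_ne_zero_of_mul hne)
    rw [map_add, vadd_eq_add, ← ha, ← hb, add_assoc]

end FreeGrading

section GradedModule

open DirectSum

variable {ι S M N σM σN : Type*} [DecidableEq ι] [Semiring S] [AddCommMonoid M] [Module S M]
  [AddCommMonoid N] [Module S N] [SetLike σM M] [AddSubmonoidClass σM M] [SetLike σN N]
  [AddSubmonoidClass σN N] {ℳ : ι → σM} [Decomposition ℳ] {𝒩 : ι → σN} [Decomposition 𝒩]

theorem decompose_map {L : M →ₗ[S] N} (hL : ∀ i, ∀ x ∈ ℳ i, L x ∈ 𝒩 i) (x : M) (i : ι) :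
    (decompose 𝒩 (L x) i : N) = L (decompose ℳ x i) := by
  induction x using Decomposition.inductionOn ℳ with
  | zero => simp
  | @homogeneous j x =>
    rcases eq_or_ne j i with rfl | hji
    · rw [decompose_of_mem_same _ (hL _ _ x.2), decompose_of_mem_same _ x.2]
    · rw [decompose_of_mem_ne _ (hL _ _ x.2) hji, decompose_of_mem_ne _ x.2 hji, map_zero]
  | add x y hx hy => simp [decompose_add, hx, hy]

theorem exists_mem_map_eq_of_mem_range {L : M →ₗ[S] N} (hL : ∀ i, ∀ x ∈ ℳ i, L x ∈ 𝒩 i) {i : ι}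
    {y : N} (hy : y ∈ 𝒩 i) (hyL : y ∈ L.range) : ∃ x ∈ ℳ i, L x = y := by
  obtain ⟨x, rfl⟩ := hyL
  exact ⟨decompose ℳ x i, SetLike.coe_mem _, by rw [← decompose_map hL, decompose_of_mem_same _ hy]⟩

theorem isHomogeneous_comap {L : M →ₗ[S] N} (hL : ∀ i, ∀ x ∈ ℳ i, L x ∈ 𝒩 i)
    {p : Submodule S N} (hp : p.IsHomogeneous 𝒩) : (p.comap L).IsHomogeneous ℳ := fun i x hx => by
  rw [Submodule.mem_comap, ← decompose_map hL]
  exact hp i hx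

theorem isHomogeneous_ker {L : M →ₗ[S] N} (hL : ∀ i, ∀ x ∈ ℳ i, L x ∈ 𝒩 i) :
    L.ker.IsHomogeneous ℳ :=
  isHomogeneous_comap hL (p := ⊥) fun i x hx => by simp [(Submodule.mem_bot S).1 hx]

theorem exists_fin_irredundant_homogeneous_span_eq {p : Submodule S M} (hp : p.IsHomogeneous ℳ)
    (hfg : p.FG) : ∃ (k : ℕ) (g : Fin k → M), (∀ i, SetLike.IsHomogeneousElem ℳ (g i)) ∧
      Submodule.span S (Set.range g) = p ∧ ∀ i, g i ∉ Submodule.span S (g '' {i}ᶜ) := by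
  classical
  have hspan : Submodule.span S {x | x ∈ p ∧ SetLike.IsHomogeneousElem ℳ x} = p := by
    refine le_antisymm (Submodule.span_le.2 fun x hx => hx.1) fun x hx => ?_
    rw [← sum_support_decompose ℳ x]
    exact sum_mem fun i _ => Submodule.subset_span ⟨hp i hx, i, SetLike.coe_mem _⟩
  obtain ⟨k, g, hg, hgspan, hirr⟩ := exists_fin_irredundant_span_eq (hspan ▸ hfg)
  exact ⟨k, g, fun i => (hg i).2, hgspan.trans hspan, hirr⟩

end GradedModule

section GradedMap

variable {σ B R M σM : Type*} [CommSemiring R] [AddCommMonoid M] [Module (MvPolynomial σ R) M]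
  {deg : B → ℕ} {j : ℕ} {v : B →₀ MvPolynomial σ R}

theorem single_one_mem_freeGrading (b : B) :
    Finsupp.single b (1 : MvPolynomial σ R) ∈ freeGrading R deg (deg b) := by
  simpa using single_mem_freeGrading (isHomogeneous_one σ R) b

theorem isHomogeneous_apply_of_mem_freeGrading {c : B} (hv : v ∈ freeGrading R deg (j + deg c)) :
    (v c).IsHomogeneous j :=
  isHomogeneous_iff_degree.2 fun m hm => Nat.add_right_cancel (hv c m hm)

theorem map_eq_sum_smul_single_one (L : (B →₀ MvPolynomial σ R) →ₗ[MvPolynomial σ R] M)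
    (v : B →₀ MvPolynomial σ R) : L v = v.sum fun b p => p • L (Finsupp.single b 1) := by
  conv_lhs => rw [← v.sum_single, map_finsuppSum]
  refine Finsupp.sum_congr fun b _ => ?_
  rw [← map_smul, Finsupp.smul_single_one]

theorem map_mem_of_map_single_mem [SetLike σM M] [AddSubmonoidClass σM M] {ℳ : ℕ → σM}
    [SetLike.GradedSMul (homogeneousSubmodule σ R) ℳ]
    {L : (B →₀ MvPolynomial σ R) →ₗ[MvPolynomial σ R] M}
    (hL : ∀ b, L (Finsupp.single b 1) ∈ ℳ (deg b)) (hv : v ∈ freeGrading R deg j) :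
    L v ∈ ℳ j := by
  rw [map_eq_sum_smul_single_one]
  refine sum_mem fun b hb => ?_
  obtain ⟨m, hm⟩ := ne_zero_iff.1 (Finsupp.mem_support_iff.1 hb)
  obtain rfl := hv b m hm
  exact SetLike.GradedSMul.smul_mem (A := homogeneousSubmodule σ R)
    (isHomogeneous_apply_of_mem_freeGrading hv) (hL b)

theorem exists_map_single_ne_zero_of_map_ne_zero
    {L : (B →₀ MvPolynomial σ R) →ₗ[MvPolynomial σ R] M} (hv : v ∈ freeGrading R deg j)
    (hLv : L v ≠ 0) : ∃ b, deg b ≤ j ∧ L (Finsupp.single b 1) ≠ 0 := by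
  rw [map_eq_sum_smul_single_one] at hLv
  obtain ⟨b, -, hb⟩ := Finset.exists_ne_zero_of_sum_ne_zero hLv
  obtain ⟨m, hm⟩ := ne_zero_iff.1 (left_ne_zero_of_smul hb)
  exact ⟨b, (Nat.le_add_left _ _).trans (hv b m hm).le, right_ne_zero_of_smul hb⟩

end GradedMap

section MinimalCover

variable {σ K : Type*} [Field K]

theorem coeff_zero_eq_zero_of_linearCombination_eq_zero {B M σM : Type*} [AddCommGroup M]
    [Module (MvPolynomial σ K) M] [SetLike σM M] [AddSubmonoidClass σM M] {ℳ : ℕ → σM}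
    [DirectSum.Decomposition ℳ] [SetLike.GradedSMul (homogeneousSubmodule σ K) ℳ]
    {g : B → M} {deg : B → ℕ} (hg : ∀ b, g b ∈ ℳ (deg b))
    (hirr : ∀ b, g b ∉ Submodule.span (MvPolynomial σ K) (g '' {b}ᶜ))
    {v : B →₀ MvPolynomial σ K} (hv : Finsupp.linearCombination (MvPolynomial σ K) g v = 0)
    (b : B) : coeff 0 (v b) = 0 := by
  classical
  set L := Finsupp.linearCombination (MvPolynomial σ K) g
  have hL : ∀ i, ∀ v ∈ freeGrading K deg i, L v ∈ ℳ i :=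
    fun i v => map_mem_of_map_single_mem (fun b => by simpa [L] using hg b)
  -- If `coeff 0 (v b) ≠ 0`, the degree `deg b` part of the relation `v` expresses `g b` through the
  -- other generators.
  let w : B →₀ MvPolynomial σ K := DirectSum.decompose (freeGrading K deg) v (deg b)
  have hw : L w = 0 := by rw [← decompose_map hL, hv]; simp
  have hwb : w b = C (coeff 0 (v b)) := by
    ext m
    rw [coeff_decompose_freeGrading, ← homogeneousComponent_zero, coeff_homogeneousComponent]
    simp only [Nat.add_eq_right]
  by_contra hne
  have hmem : L (w.erase b) ∈ Submodule.span (MvPolynomial σ K) (g '' {b}ᶜ) :=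
    (Finsupp.mem_span_image_iff_linearCombination _).2
      ⟨w.erase b, by simp [Finsupp.mem_supported, Set.subset_def], rfl⟩
  rw [← w.single_add_erase b, map_add, hwb] at hw
  have hsmul : (C (coeff 0 (v b)) : MvPolynomial σ K) • g b ∈
        Submodule.span (MvPolynomial σ K) (g '' {b}ᶜ) := by
    rw [← Finsupp.linearCombination_single, eq_neg_of_add_eq_zero_left hw]
    exact neg_mem hmem
  exact hirr b ((Submodule.smul_mem_iff_of_isUnit _ ((Ne.isUnit hne).map C)).1 hsmul)

theorem exists_minimal_cover {B : Type*} [Finite σ] [Finite B] {deg : B → ℕ}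
    {N : Submodule (MvPolynomial σ K) (B →₀ MvPolynomial σ K)}
    (hN : N.IsHomogeneous (freeGrading K deg)) :
    ∃ (k : ℕ) (deg' : Fin k → ℕ)
      (d : (Fin k →₀ MvPolynomial σ K) →ₗ[MvPolynomial σ K] (B →₀ MvPolynomial σ K)),
      d.range = N ∧ (∀ b, d (Finsupp.single b 1) ∈ freeGrading K deg (deg' b)) ∧
        ∀ v ∈ d.ker, ∀ c, coeff 0 (v c) = 0 := by
  obtain ⟨k, g, hg, hspan, hirr⟩ :=
    exists_fin_irredundant_homogeneous_span_eq hN (IsNoetherian.noetherian N)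
  choose deg' hdeg' using hg
  exact ⟨k, deg', Finsupp.linearCombination _ g, by rw [Finsupp.range_linearCombination, hspan],
    fun b => by simpa using hdeg' b,
    fun v hv => coeff_zero_eq_zero_of_linearCombination_eq_zero hdeg' hirr hv⟩

end MinimalCover

section Existence

attribute [local instance] MvPolynomial.gradedAlgebra

variable {σ K : Type*} [Field K]

/-- A stage in the construction of a minimal graded free resolution: a graded free module
`⨁ b : Fin rank, S(-deg b)` with a homogeneous submodule `syzygies` of the maximal ideal times it,
which is still to be resolved. -/
structure SyzygyStage (K : Type*) [Field K] (σ : Type*) where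
  rank : ℕ
  deg : Fin rank → ℕ
  syzygies : Submodule (MvPolynomial σ K) (Fin rank →₀ MvPolynomial σ K)
  isHomogeneous : syzygies.IsHomogeneous (freeGrading K deg)
  coeff_zero : ∀ v ∈ syzygies, ∀ c, coeff 0 (v c) = 0

theorem SyzygyStage.exists_next [Finite σ] (s : SyzygyStage K σ) :
    ∃ (t : SyzygyStage K σ)
      (d : (Fin t.rank →₀ MvPolynomial σ K) →ₗ[MvPolynomial σ K]
        (Fin s.rank →₀ MvPolynomial σ K)),
      d.range = s.syzygies ∧
        (∀ b, d (Finsupp.single b 1) ∈ freeGrading K s.deg (t.deg b)) ∧ d.ker = t.syzygies := by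
  obtain ⟨k, deg, d, hrange, hdeg, hcoeff⟩ := exists_minimal_cover s.isHomogeneous
  have hker : d.ker.IsHomogeneous (freeGrading K deg) :=
    isHomogeneous_ker fun i v hv => map_mem_of_map_single_mem hdeg hv
  exact ⟨⟨k, deg, d.ker, hker, hcoeff⟩, d, hrange, hdeg, rfl⟩

theorem nonempty_minGradedFreeRes [Finite σ] {I : Ideal (MvPolynomial σ K)}
    (hI : I.IsHomogeneous (homogeneousSubmodule σ K)) (hIm : I ≤ idealOfVars σ K) :
    Nonempty (MinGradedFreeRes K σ I) := by
  let ε : (Fin 1 →₀ MvPolynomial σ K) →ₗ[MvPolynomial σ K] MvPolynomial σ K := Finsupp.lapply 0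
  have hε : ∀ i, ∀ v ∈ freeGrading K (0 : Fin 1 → ℕ) i, ε v ∈ homogeneousSubmodule σ K i :=
    fun i v hv => isHomogeneous_apply_of_mem_freeGrading (deg := 0) hv
  let start : SyzygyStage K σ :=
    { rank := 1
      deg := 0
      syzygies := Submodule.comap ε I
      isHomogeneous := isHomogeneous_comap hε hI
      coeff_zero v hv c := by
        rw [Subsingleton.elim c 0]
        exact mem_idealOfVars_iff_coeff_zero.1 (hIm hv) }
  choose next d hrange hdeg hker using SyzygyStage.exists_next (K := K) (σ := σ)
  let stage : ℕ → SyzygyStage K σ := fun i => Nat.rec start (fun _ s => next s) i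
  exact ⟨{
    B i := Fin (stage i).rank
    finB i := inferInstance
    deg i := (stage i).deg
    d i := d (stage i)
    ε := ε
    ε_homog b := hε _ _ (single_mem_freeGrading (deg := 0) (isHomogeneous_one σ K) b)
    surj p := ⟨Finsupp.single 0 p, by simp [ε]⟩
    exact0 := hrange start
    exact i := (hrange (next (stage i))).trans (hker (stage i)).symm
    homog i b c m hm := hdeg (stage i) b c m (mem_support_iff.1 hm)
    minimal i b c := (stage i).coeff_zero _ (hrange (stage i) ▸ LinearMap.mem_range_self _ _) c }⟩

end Existence

section LinearSyzygies

variable {σ K : Type*} [Field K]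

/-- A linear functional `φ` kills the linear syzygies of the degree `d` part `I_d` of an ideal if
`φ ⊗ 1` vanishes on the kernel of the multiplication map from `I_d ⊗ S_1` to `S`. The elements of
this kernel are written as finite sums `∑ i ∈ s, g i ⊗ l i`. -/
def KillsLinearSyzygies (I : Ideal (MvPolynomial σ K)) (d : ℕ) (φ : MvPolynomial σ K →ₗ[K] K) :
    Prop :=
  ∀ {ι : Type} (s : Finset ι) (l g : ι → MvPolynomial σ K), (∀ i ∈ s, (l i).IsHomogeneous 1) →
    (∀ i ∈ s, g i ∈ I) → (∀ i ∈ s, (g i).IsHomogeneous d) → ∑ i ∈ s, l i * g i = 0 →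
      ∑ i ∈ s, φ (g i) • l i = 0

end LinearSyzygies

namespace MinGradedFreeRes

attribute [local instance] MvPolynomial.gradedAlgebra

variable {σ K : Type*} [Field K] {I : Ideal (MvPolynomial σ K)} (F : MinGradedFreeRes K σ I)

theorem d_mem {i j : ℕ} {v : F.B (i + 1) →₀ MvPolynomial σ K}
    (hv : v ∈ freeGrading K (F.deg (i + 1)) j) : F.d i v ∈ freeGrading K (F.deg i) j :=
  map_mem_of_map_single_mem (fun b c m hm => F.homog i b c m (mem_support_iff.2 hm)) hv

theorem ε_mem {j : ℕ} {v : F.B 0 →₀ MvPolynomial σ K} (hv : v ∈ freeGrading K (F.deg 0) j) :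
    F.ε v ∈ homogeneousSubmodule σ K j :=
  map_mem_of_map_single_mem F.ε_homog hv

theorem ε_d_mem (v : F.B 1 →₀ MvPolynomial σ K) : F.ε (F.d 0 v) ∈ I :=
  F.exact0.le (LinearMap.mem_range_self _ v)

theorem d_d (i : ℕ) (v : F.B (i + 2) →₀ MvPolynomial σ K) : F.d i (F.d (i + 1) v) = 0 :=
  (F.exact i).le (LinearMap.mem_range_self _ v)

theorem d_apply_mem_idealOfVars (i : ℕ) (v : F.B (i + 1) →₀ MvPolynomial σ K) (c : F.B i) :
    F.d i v c ∈ idealOfVars σ K := by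
  rw [map_eq_sum_smul_single_one, Finsupp.sum, Finsupp.finsetSum_apply]
  exact sum_mem fun b _ =>
    Ideal.mul_mem_left _ _ (mem_idealOfVars_iff_coeff_zero.2 (F.minimal i b c))

theorem exists_mem_ε_eq_one (hI : I ≤ idealOfVars σ K) :
    ∃ a ∈ freeGrading K (F.deg 0) 0, F.ε a = 1 := by
  obtain ⟨t, ht⟩ := F.surj 1
  have ht0 : coeff 0 (F.ε t) = 1 := by
    simpa [sub_eq_zero] using mem_idealOfVars_iff_coeff_zero.1 (hI ht)
  refine ⟨DirectSum.decompose (freeGrading K (F.deg 0)) t 0, SetLike.coe_mem _, ?_⟩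
  rw [← decompose_map (𝒩 := homogeneousSubmodule σ K) fun i v => F.ε_mem]
  exact (decomposition.decompose'_apply _ _).trans (by rw [homogeneousComponent_zero, ht0, C_1])

/-- The minimal generators of the ideal given by the basis of `F_1`. -/
noncomputable def generator (b : F.B 1) : MvPolynomial σ K :=
  F.ε (F.d 0 (Finsupp.single b 1))

theorem isHomogeneous_generator (b : F.B 1) : (F.generator b).IsHomogeneous (F.deg 1 b) :=
  F.ε_mem (F.d_mem (single_one_mem_freeGrading b))

theorem homogeneousComponent_generator (d : ℕ) (b : F.B 1) :
    homogeneousComponent d (F.generator b) = if d = F.deg 1 b then F.generator b else 0 :=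
  homogeneousComponent_of_mem (F.isHomogeneous_generator b)

theorem ε_d_eq_sum (v : F.B 1 →₀ MvPolynomial σ K) :
    F.ε (F.d 0 v) = v.sum fun b p => p * F.generator b :=
  map_eq_sum_smul_single_one (F.ε ∘ₗ F.d 0) v

theorem homogeneousComponent_ε_d {d j : ℕ} (hd : I ≤ idealOfVars σ K ^ d)
    {v : F.B 1 →₀ MvPolynomial σ K} (hv : ∀ b, v b ∈ idealOfVars σ K ^ j) :
    homogeneousComponent (j + d) (F.ε (F.d 0 v)) =
      v.sum fun b p => homogeneousComponent j p * homogeneousComponent d (F.generator b) := by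
  rw [ε_d_eq_sum, map_finsuppSum]
  exact Finsupp.sum_congr fun b _ =>
    homogeneousComponent_add_mul (hv b) (hd (F.ε_d_mem (Finsupp.single b 1)))

/-- The extension of a functional on the degree `d` part of the ideal to a map `F_1 → S` which
sends each basis element to the value of `φ` at the corresponding generator. -/
noncomputable def contraction (d : ℕ) (φ : MvPolynomial σ K →ₗ[K] K) :
    (F.B 1 →₀ MvPolynomial σ K) →ₗ[MvPolynomial σ K] MvPolynomial σ K :=
  Finsupp.linearCombination _ fun b => C (φ (homogeneousComponent d (F.generator b)))

variable {d : ℕ} {φ : MvPolynomial σ K →ₗ[K] K}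

theorem contraction_eq_sum (v : F.B 1 →₀ MvPolynomial σ K) :
    F.contraction d φ v =
      v.sum fun b p => φ (homogeneousComponent d (F.generator b)) • p := by
  simp only [contraction, Finsupp.linearCombination_apply, smul_eq_mul, smul_eq_C_mul, mul_comm]

theorem homogeneousComponent_contraction (j : ℕ) (v : F.B 1 →₀ MvPolynomial σ K) :
    homogeneousComponent j (F.contraction d φ v) =
      v.sum fun b p => φ (homogeneousComponent d (F.generator b)) • homogeneousComponent j p := by
  simp only [contraction_eq_sum, map_finsuppSum, map_smul]

theorem degree_add_eq_of_coeff_contraction_ne_zero {j : ℕ} {v : F.B 1 →₀ MvPolynomial σ K}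
    (hv : v ∈ freeGrading K (F.deg 1) j) {m : σ →₀ ℕ} (hm : coeff m (F.contraction d φ v) ≠ 0) :
    m.degree + d = j := by
  rw [contraction_eq_sum, Finsupp.sum, coeff_sum] at hm
  obtain ⟨b, -, hb⟩ := Finset.exists_ne_zero_of_sum_ne_zero hm
  simp only [homogeneousComponent_generator, coeff_smul] at hb
  obtain rfl : d = F.deg 1 b := by
    by_contra h
    simp [h] at hb
  exact hv b m (right_ne_zero_of_smul hb)

theorem contraction_eq_C (hd : I ≤ idealOfVars σ K ^ d) {v : F.B 1 →₀ MvPolynomial σ K}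
    (hv : v ∈ freeGrading K (F.deg 1) d) : F.contraction d φ v = C (φ (F.ε (F.d 0 v))) := by
  have hπ : homogeneousComponent 0 (F.contraction d φ v) = F.contraction d φ v := by
    refine (homogeneousComponent_of_mem (isHomogeneous_iff_degree.2 fun m hm => ?_)).trans
      (if_pos rfl)
    exact Nat.add_eq_right.1 (F.degree_add_eq_of_coeff_contraction_ne_zero hv hm)
  have hε : homogeneousComponent (0 + d) (F.ε (F.d 0 v)) = F.ε (F.d 0 v) := by
    rw [zero_add, homogeneousComponent_of_mem (F.ε_mem (F.d_mem hv)), if_pos rfl]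
  rw [← hπ, ← hε, F.homogeneousComponent_ε_d hd (by simp), homogeneousComponent_contraction,
    map_finsuppSum, map_finsuppSum]
  refine Finsupp.sum_congr fun b _ => ?_
  rw [homogeneousComponent_zero, ← smul_eq_C_mul, map_smul, smul_eq_C_mul, ← C_mul, smul_eq_mul,
    mul_comm]

theorem contraction_d_mem (hd : I ≤ idealOfVars σ K ^ d) (hφ : KillsLinearSyzygies I d φ)
    (w : F.B 2 →₀ MvPolynomial σ K) : F.contraction d φ (F.d 1 w) ∈ idealOfVars σ K ^ 2 := by
  have hw := F.d_apply_mem_idealOfVars 1 w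
  have hconst : homogeneousComponent 0 (F.contraction d φ (F.d 1 w)) = 0 := by
    rw [homogeneousComponent_contraction]
    refine Finset.sum_eq_zero fun b _ => ?_
    simp [homogeneousComponent_zero, mem_idealOfVars_iff_coeff_zero.1 (hw b)]
  have hsyz := F.homogeneousComponent_ε_d (j := 1) hd (v := F.d 1 w) (by simpa using hw)
  rw [F.d_d 0 w, map_zero, map_zero] at hsyz
  have hgen (b : F.B 1) : homogeneousComponent d (F.generator b) ∈ I := by
    rw [homogeneousComponent_generator]
    split_ifs
    exacts [F.ε_d_mem _, zero_mem _]
  have hlin : homogeneousComponent 1 (F.contraction d φ (F.d 1 w)) = 0 := by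
    rw [homogeneousComponent_contraction]
    exact hφ _ _ _ (fun b _ => homogeneousComponent_isHomogeneous 1 _) (fun b _ => hgen b)
      (fun b _ => homogeneousComponent_isHomogeneous d _) hsyz.symm
  refine (mem_pow_idealOfVars_iff' 2 _).2 fun m hm => ?_
  have hm' : coeff m (homogeneousComponent m.degree (F.contraction d φ (F.d 1 w))) = 0 := by
    interval_cases m.degree
    exacts [by rw [hconst, coeff_zero], by rw [hlin, coeff_zero]]
  simpa [coeff_homogeneousComponent] using hm'

theorem add_two_le_deg_of_contraction_ne_zero (hd : I ≤ idealOfVars σ K ^ d)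
    (hφ : KillsLinearSyzygies I d φ) {b : F.B 2}
    (hb : F.contraction d φ (F.d 1 (Finsupp.single b 1)) ≠ 0) : d + 2 ≤ F.deg 2 b := by
  obtain ⟨m, hm⟩ := ne_zero_iff.1 hb
  have hdeg : m.degree + d = F.deg 2 b :=
    F.degree_add_eq_of_coeff_contraction_ne_zero (F.d_mem (single_one_mem_freeGrading b)) hm
  have hm2 : 2 ≤ m.degree := by
    by_contra! h
    exact hm ((mem_pow_idealOfVars_iff' 2 _).1 (F.contraction_d_mem hd hφ _) m h)
  omega

theorem exists_lift (hd : I ≤ idealOfVars σ K ^ d) {a : F.B 0 →₀ MvPolynomial σ K}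
    (ha : a ∈ freeGrading K (F.deg 0) 0) (hεa : F.ε a = 1) {f : MvPolynomial σ K} (hf : f ∈ I)
    (hfd : f.IsHomogeneous d) :
    ∃ v ∈ freeGrading K (F.deg 1) d, F.d 0 v = f • a ∧ F.contraction d φ v = C (φ f) := by
  obtain ⟨v, hv, hdv⟩ := exists_mem_map_eq_of_mem_range (𝒩 := freeGrading K (F.deg 0))
    (fun i v => F.d_mem) (SetLike.GradedSMul.smul_mem (A := homogeneousSubmodule σ K) hfd ha)
    (F.exact0.ge (by simpa [hεa] using hf))
  refine ⟨v, hv, hdv, ?_⟩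
  rw [F.contraction_eq_C hd hv, hdv, map_smul, hεa, smul_eq_mul, mul_one]

theorem exists_deg_two_mem_Icc (hd₀ : d ≠ 0) (hd : I ≤ idealOfVars σ K ^ d)
    (hφ : KillsLinearSyzygies I d φ) {f f' : MvPolynomial σ K} (hf : f ∈ I) (hf' : f' ∈ I)
    (hfd : f.IsHomogeneous d) (hfd' : f'.IsHomogeneous d) (hne : φ f' • f ≠ φ f • f') :
    ∃ b, F.deg 2 b ∈ Set.Icc (d + 2) (d + d) := by
  obtain ⟨a, ha, hεa⟩ := F.exists_mem_ε_eq_one (hd.trans (Ideal.pow_le_self hd₀))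
  obtain ⟨v, hv, hdv, hπv⟩ := F.exists_lift (φ := φ) hd ha hεa hf hfd
  obtain ⟨v', hv', hdv', hπv'⟩ := F.exists_lift (φ := φ) hd ha hεa hf' hfd'
  have koszul_mem : f • v' - f' • v ∈ freeGrading K (F.deg 1) (d + d) := sub_mem
    (SetLike.GradedSMul.smul_mem (A := homogeneousSubmodule σ K) hfd hv')
    (SetLike.GradedSMul.smul_mem (A := homogeneousSubmodule σ K) hfd' hv)
  obtain ⟨w, hw, hdw⟩ := exists_mem_map_eq_of_mem_range (𝒩 := freeGrading K (F.deg 1))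
    (fun i v => F.d_mem) koszul_mem ((F.exact 0).ge (by simp [hdv, hdv', smul_comm f f' a]))
  have hπ : F.contraction d φ (F.d 1 w) ≠ 0 := by
    rwa [hdw, map_sub, map_smul, map_smul, hπv, hπv', sub_ne_zero, smul_eq_mul, smul_eq_mul,
      mul_comm f, mul_comm f', ← smul_eq_C_mul, ← smul_eq_C_mul]
  obtain ⟨b, hbd, hb⟩ :=
    exists_map_single_ne_zero_of_map_ne_zero (L := F.contraction d φ ∘ₗ F.d 1) hw hπ
  exact ⟨b, F.add_two_le_deg_of_contraction_ne_zero hd hφ hb, hbd⟩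

end MinGradedFreeRes

section Diamond

attribute [local instance] MvPolynomial.gradedAlgebra

variable (K : Type*) [Field K] (n : ℕ)

/-- The exponent of the monomial `xz`, which occurs with the same coefficient in every generator. -/
noncomputable def xzExponent : Fin (n + 2) →₀ ℕ :=
  Finsupp.single 0 1 + Finsupp.single (Fin.last (n + 1)) 1

/-- The generator `y_i y_j - xz` of the diamond ideal. -/
noncomputable def diamondBinomial (i j : Fin n) : MvPolynomial (Fin (n + 2)) K :=
  yP K n i * yP K n j - xP K n * zP K n

theorem xP_mul_zP : xP K n * zP K n = monomial (xzExponent n) 1 := by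
  rw [xP, zP, X, X, monomial_mul, mul_one, xzExponent]

/-- The prime ideal generated by the variables `y_j` with `j ≠ i`: it contains all products of two
distinct `y`s but no power of `xz`. -/
noncomputable def yIdeal (i : Fin n) : Ideal (MvPolynomial (Fin (n + 2)) K) :=
  Ideal.span (X '' ((fun j : Fin n => j.succ.castSucc) '' {i}ᶜ))

variable {K n}

theorem xzExponent_apply_y (j : Fin n) : xzExponent n j.succ.castSucc = 0 := by
  simp [xzExponent, Fin.castSucc_ne_last]

theorem mem_yIdeal_of_mul_xP_mul_zP_mem {i : Fin n} {p : MvPolynomial (Fin (n + 2)) K}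
    (hp : p * (xP K n * zP K n) ∈ yIdeal K n i) : p ∈ yIdeal K n i := by
  rw [xP_mul_zP] at hp
  refine mem_span_X_image_of_mul_monomial_mem ?_ hp
  rintro _ ⟨j, -, rfl⟩
  exact xzExponent_apply_y j

theorem yP_mem_yIdeal {i j : Fin n} (hji : j ≠ i) : yP K n j ∈ yIdeal K n i :=
  Ideal.subset_span ⟨_, ⟨j, hji, rfl⟩, rfl⟩

theorem yP_mul_yP_mem_yIdeal {a b : Fin n} (hab : a ≠ b) (i : Fin n) :
    yP K n a * yP K n b ∈ yIdeal K n i := by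
  rcases ne_or_eq a i with hai | rfl
  · exact Ideal.mul_mem_right _ _ (yP_mem_yIdeal hai)
  · exact Ideal.mul_mem_left _ _ (yP_mem_yIdeal hab.symm)

theorem eq_zero_of_forall_mem_yIdeal (hn : n ≠ 0) {p : MvPolynomial (Fin (n + 2)) K}
    (hp : p.IsHomogeneous 1) (hmem : ∀ i, p ∈ yIdeal K n i) : p = 0 := by
  by_contra hne
  obtain ⟨m, hm⟩ := ne_zero_iff.1 hne
  obtain ⟨s, rfl⟩ : m ∈ Set.range fun s => Finsupp.single s 1 := by
    rw [Finsupp.range_single_one]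
    exact isHomogeneous_iff_degree.1 hp m hm
  have hs (i : Fin n) : ∃ j : Fin n, j ≠ i ∧ j.succ.castSucc = s := by
    obtain ⟨-, ⟨j, hj, rfl⟩, hjs⟩ := mem_ideal_span_X_image.1 (hmem i) _ (mem_support_iff.2 hm)
    exact ⟨j, hj, by_contra fun h => hjs (Finsupp.single_eq_of_ne h)⟩
  obtain ⟨j, -, rfl⟩ := hs ⟨0, Nat.pos_of_ne_zero hn⟩
  obtain ⟨j', hj', h⟩ := hs j
  exact hj' (Fin.succ_injective _ (Fin.castSucc_injective _ h))

theorem isHomogeneous_diamondBinomial (i j : Fin n) : (diamondBinomial K n i j).IsHomogeneous 2 :=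
  ((isHomogeneous_X K _).mul (isHomogeneous_X K _)).sub
    ((isHomogeneous_X K _).mul (isHomogeneous_X K _))

theorem diamondBinomial_mem_diamondIdeal {i j : Fin n} (hij : i < j) :
    diamondBinomial K n i j ∈ diamondIdeal K n :=
  Ideal.subset_span ⟨i, j, hij, rfl⟩

variable (K n) in
theorem isHomogeneous_diamondIdeal :
    (diamondIdeal K n).IsHomogeneous (homogeneousSubmodule (Fin (n + 2)) K) :=
  Ideal.homogeneous_span _ _ (by
    rintro _ ⟨i, j, -, rfl⟩
    exact ⟨2, isHomogeneous_diamondBinomial i j⟩)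

variable (K n) in
theorem diamondIdeal_le_idealOfVars_sq : diamondIdeal K n ≤ idealOfVars (Fin (n + 2)) K ^ 2 :=
  Ideal.span_le.2 (by
    rintro _ ⟨i, j, -, rfl⟩
    exact mem_pow_idealOfVars_of_isHomogeneous (isHomogeneous_diamondBinomial i j))

theorem coeff_xzExponent_yP_mul_yP (i j : Fin n) :
    coeff (xzExponent n) (yP K n i * yP K n j) = 0 := by
  rw [yP, yP, coeff_mul_X', if_neg]
  exact Finsupp.notMem_support_iff.2 (xzExponent_apply_y j)

theorem coeff_xzExponent_diamondBinomial (i j : Fin n) :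
    coeff (xzExponent n) (diamondBinomial K n i j) = -1 := by
  rw [diamondBinomial, coeff_sub, coeff_xzExponent_yP_mul_yP, xP_mul_zP, coeff_monomial, if_pos rfl,
    zero_sub]

theorem sub_coeff_xzExponent_smul_mem_yIdeal {g : MvPolynomial (Fin (n + 2)) K}
    (hg : g ∈ diamondIdeal K n) (hg2 : g.IsHomogeneous 2) (i : Fin n) :
    g - coeff (xzExponent n) g • (xP K n * zP K n) ∈ yIdeal K n i := by
  let L : MvPolynomial (Fin (n + 2)) K →ₗ[K] MvPolynomial (Fin (n + 2)) K :=
    LinearMap.id - (lcoeff K (xzExponent n)).smulRight (xP K n * zP K n)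
  suffices hle : Submodule.span K {f | ∃ a b : Fin n, a < b ∧ f = diamondBinomial K n a b} ≤
      ((yIdeal K n i).restrictScalars K).comap L by
    have hspan := homogeneousComponent_mem_span (d := 2)
      (by rintro _ ⟨a, b, -, rfl⟩; exact isHomogeneous_diamondBinomial a b) hg
    rw [homogeneousComponent_of_mem hg2, if_pos rfl] at hspan
    simpa [L] using hle hspan
  refine Submodule.span_le.2 ?_
  rintro _ ⟨a, b, hab, rfl⟩
  have hL : L (diamondBinomial K n a b) = yP K n a * yP K n b := by
    simp only [L, LinearMap.sub_apply, LinearMap.id_apply, LinearMap.smulRight_apply, lcoeff_apply,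
      coeff_xzExponent_diamondBinomial, neg_one_smul, sub_neg_eq_add]
    exact sub_add_cancel _ _
  simpa [hL] using yP_mul_yP_mem_yIdeal (K := K) hab.ne i

theorem killsLinearSyzygies_diamondIdeal (hn : n ≠ 0) :
    KillsLinearSyzygies (diamondIdeal K n) 2 (lcoeff K (xzExponent n)) := by
  intro ι s l g hl hg hg2 hsum
  refine eq_zero_of_forall_mem_yIdeal hn (IsHomogeneous.sum _ _ _ fun k hk => ?_) fun i => ?_
  · rw [smul_eq_C_mul]
    simpa using (isHomogeneous_C _ _).mul (hl k hk)
  have hmem : ∑ k ∈ s, l k * (g k - coeff (xzExponent n) (g k) • (xP K n * zP K n)) ∈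
      yIdeal K n i := sum_mem fun k hk =>
    Ideal.mul_mem_left _ _ (sub_coeff_xzExponent_smul_mem_yIdeal (hg k hk) (hg2 k hk) i)
  simp only [mul_sub, Finset.sum_sub_distrib, hsum, zero_sub, neg_mem_iff] at hmem
  refine mem_yIdeal_of_mul_xP_mul_zP_mem ?_
  simpa only [Finset.sum_mul, lcoeff_apply, smul_mul_assoc, mul_smul_comm] using hmem

theorem diamondBinomial_ne {i j k : Fin n} (hjk : j ≠ k) :
    diamondBinomial K n i j ≠ diamondBinomial K n i k := by
  intro h
  have hy := mul_left_cancel₀ (X_ne_zero _) (sub_left_inj.1 h)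
  exact hjk (Fin.succ_injective _ (Fin.castSucc_injective _ (X_injective hy)))

theorem exists_deg_two_eq_four (hn : 3 ≤ n)
    (F : MinGradedFreeRes K (Fin (n + 2)) (diamondIdeal K n)) : ∃ b, F.deg 2 b = 4 := by
  let y : Fin 3 → Fin n := Fin.castLE hn
  have hy : StrictMono y := Fin.strictMono_castLE hn
  obtain ⟨b, hb⟩ := F.exists_deg_two_mem_Icc two_ne_zero (diamondIdeal_le_idealOfVars_sq K n)
    (killsLinearSyzygies_diamondIdeal (by lia))
    (diamondBinomial_mem_diamondIdeal (hy (a := 0) (b := 1) (by decide)))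
    (diamondBinomial_mem_diamondIdeal (hy (a := 0) (b := 2) (by decide)))
    (isHomogeneous_diamondBinomial _ _) (isHomogeneous_diamondBinomial _ _) (by
      simpa only [lcoeff_apply, coeff_xzExponent_diamondBinomial, neg_smul, one_smul, ne_eq,
        neg_inj] using diamondBinomial_ne (hy.injective.ne (by decide)))
  exact ⟨b, le_antisymm hb.2 hb.1⟩

end Diamond

/-- `β_{2,4}(S/I) > 0` for the diamond ideal; consequently `I`, which is generated in
degree `2`, is not linearly related (its minimal first syzygies are not all linear). -/
theorem diamond_not_linearly_related (K : Type*) [Field K] (n : ℕ) (hn : 3 ≤ n) :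
    Nonempty (MinGradedFreeRes K (Fin (n + 2)) (diamondIdeal K n)) ∧
      ∀ F : MinGradedFreeRes K (Fin (n + 2)) (diamondIdeal K n),
        0 < F.betti 2 4 ∧ ∃ b : F.B 2, 4 ≤ F.deg 2 b := by
  refine ⟨nonempty_minGradedFreeRes (isHomogeneous_diamondIdeal K n)
    ((diamondIdeal_le_idealOfVars_sq K n).trans (Ideal.pow_le_self two_ne_zero)), fun F => ?_⟩
  obtain ⟨b, hb⟩ := exists_deg_two_eq_four hn F
  have := F.finB 2
  have : Nonempty {b : F.B 2 // F.deg 2 b = 4} := ⟨⟨b, hb⟩⟩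
  exact ⟨Nat.card_pos, b, hb.ge⟩
end

section
/- Let L be a finite modular non-distributive lattice and I_L ⊂ S = K[L] its join-meet ideal. Then β_{2,4}(S/I_L) > 0; in particular, the ideal I_L, which is generated in degree 2, is not linearly related, and hence I_L does not have a linear resolution. -/
open MvPolynomial

/-- The join-meet ideal `I_L` of a finite lattice `L`, generated by
`x_a x_b − x_{a∧b} x_{a∨b}` for incomparable `a, b ∈ L`. -/
noncomputable def joinMeetIdeal (K : Type*) [Field K] (L : Type*) [Lattice L] :
    Ideal (MvPolynomial L K) :=
  Ideal.span {f | ∃ a b : L, ¬ a ≤ b ∧ ¬ b ≤ a ∧ f = X a * X b - X (a ⊓ b) * X (a ⊔ b)}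

/-!
A modular non-distributive lattice contains a diamond with bottom `p`, top `q` and atoms `a`, `b`,
`c`, and if the lattice is finite all edges of the diamond may be taken to be coverings. Then
`f = x_a x_b - x_p x_q` and `g = x_c x_a - x_p x_q` are minimal generators of `I_L` with a Koszul
syzygy `f ε_g - g ε_f` of degree `4`, whose coordinate at `ε_f` contains `x_p x_q`.

On the other hand, since `p` is covered by `a` and `b`, no element of `I_L` of degree `2` involves
`x_p²`, `x_a²`, `x_b²`, `x_p x_a` or `x_p x_b`. Comparing coefficients at `x_p ^ n x_a x_b`, the
coordinate at `ε_f` of any syzygy contains no power of `x_p`, and likewise none of `x_q`. Hence the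
term `x_p x_q` cannot come from syzygies of lower degree: some minimal syzygy has a coordinate
containing `x_p x_q`, and its degree is `2 + 2 = 4`.
-/

/-! ### Covering diamonds in modular lattices -/

section Diamond

variable {L : Type*} [Lattice L]

/-- The diamond `M₃` as a sublattice: bottom `p`, atoms `a`, `b`, `c` and top `q`. The strict
inequality `p < q` makes the five elements distinct. -/
structure IsDiamond (p a b c q : L) : Prop where
  lt : p < q
  inf_ab : a ⊓ b = p
  inf_bc : b ⊓ c = p
  inf_ca : c ⊓ a = p
  sup_ab : a ⊔ b = q
  sup_bc : b ⊔ c = q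
  sup_ca : c ⊔ a = q

namespace IsDiamond

variable {p a b c q : L}

theorem rotate (h : IsDiamond p a b c q) : IsDiamond p b c a q :=
  ⟨h.lt, h.inf_bc, h.inf_ca, h.inf_ab, h.sup_bc, h.sup_ca, h.sup_ab⟩

theorem bot_lt (h : IsDiamond p a b c q) : p < a := by
  refine lt_of_le_of_ne (h.inf_ab ▸ inf_le_left) fun hpa => h.lt.ne ?_
  have hb : b = q := by rw [← h.sup_ab, ← hpa, ← h.inf_ab, inf_comm, sup_comm, sup_inf_self]
  have hc : c = q := by rw [← h.sup_ca, ← hpa, ← h.inf_ca, sup_inf_self]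
  rw [← h.inf_bc, hb, hc, inf_idem]

theorem ne (h : IsDiamond p a b c q) : a ≠ b := by
  rintro rfl
  exact h.bot_lt.ne (by rw [← h.inf_ab, inf_idem])

theorem not_le (h : IsDiamond p a b c q) : ¬ a ≤ b := fun hab =>
  h.bot_lt.ne (by rw [← h.inf_ab, inf_eq_left.2 hab])

theorem not_ge (h : IsDiamond p a b c q) : ¬ b ≤ a := fun hba =>
  h.rotate.bot_lt.ne (by rw [← h.inf_ab, inf_eq_right.2 hba])

end IsDiamond

/-- The join of the pairwise meets of three elements. -/
def lowerMedian (x y z : L) : L := (x ⊓ y) ⊔ (y ⊓ z) ⊔ (z ⊓ x)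

/-- The meet of the pairwise joins of three elements. -/
def upperMedian (x y z : L) : L := (x ⊔ y) ⊓ (y ⊔ z) ⊓ (z ⊔ x)

/-- The projection of `x` to the interval `[y ⊓ z, y ⊔ z]`. In a modular lattice the projections
of `x`, `y`, `z` are the atoms of the diamond generated between the two medians. -/
def medianAtom (x y z : L) : L := x ⊓ (y ⊔ z) ⊔ y ⊓ z

theorem lowerMedian_rotate (x y z : L) : lowerMedian y z x = lowerMedian x y z := by
  unfold lowerMedian
  ac_rfl

theorem upperMedian_rotate (x y z : L) : upperMedian y z x = upperMedian x y z := by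
  unfold upperMedian
  ac_rfl

theorem lowerMedian_le_upperMedian (x y z : L) : lowerMedian x y z ≤ upperMedian x y z :=
  sup_le (sup_le
    (le_inf (le_inf (inf_le_left.trans le_sup_left) (inf_le_right.trans le_sup_left))
      (inf_le_left.trans le_sup_right))
    (le_inf (le_inf (inf_le_left.trans le_sup_right) (inf_le_left.trans le_sup_left))
      (inf_le_right.trans le_sup_left)))
    (le_inf (le_inf (inf_le_right.trans le_sup_left) (inf_le_left.trans le_sup_right))
      (inf_le_left.trans le_sup_left))

variable [IsModularLattice L]

theorem medianAtom_sup (x y z : L) : medianAtom x y z ⊔ medianAtom y z x = upperMedian x y z := by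
  have hxz : z ⊓ x ≤ x ⊓ (y ⊔ z) := le_inf inf_le_right (inf_le_left.trans le_sup_right)
  have hyz : y ⊓ z ≤ y ⊓ (z ⊔ x) := inf_le_inf_left y le_sup_left
  calc medianAtom x y z ⊔ medianAtom y z x
      = (x ⊓ (y ⊔ z) ⊔ z ⊓ x) ⊔ (y ⊓ (z ⊔ x) ⊔ y ⊓ z) := by unfold medianAtom; ac_rfl
    _ = x ⊓ (y ⊔ z) ⊔ y ⊓ (z ⊔ x) := by rw [sup_eq_left.2 hxz, sup_eq_left.2 hyz]
    _ = (y ⊔ x ⊓ (y ⊔ z)) ⊓ (z ⊔ x) := by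
      rw [sup_comm y (x ⊓ _), sup_inf_assoc_of_le y (inf_le_left.trans le_sup_right)]
    _ = upperMedian x y z := by
      rw [← sup_inf_assoc_of_le x le_sup_left, sup_comm y x, upperMedian]

theorem medianAtom_inf (x y z : L) : medianAtom x y z ⊓ medianAtom y z x = lowerMedian x y z := by
  have self_dual (u v w : L) : medianAtom u v w = (u ⊔ v ⊓ w) ⊓ (v ⊔ w) := by
    rw [sup_comm u, sup_inf_assoc_of_le u (inf_le_left.trans le_sup_left), sup_comm, medianAtom]
  rw [self_dual, self_dual]
  exact medianAtom_sup (L := Lᵒᵈ) (OrderDual.toDual x) (OrderDual.toDual y) (OrderDual.toDual z)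

theorem isDiamond_median {x y z : L} (h : lowerMedian x y z ≠ upperMedian x y z) :
    IsDiamond (lowerMedian x y z) (medianAtom x y z) (medianAtom y z x) (medianAtom z x y)
      (upperMedian x y z) where
  lt := (lowerMedian_le_upperMedian x y z).lt_of_ne h
  inf_ab := medianAtom_inf x y z
  inf_bc := by rw [medianAtom_inf, lowerMedian_rotate]
  inf_ca := by rw [medianAtom_inf, lowerMedian_rotate, lowerMedian_rotate]
  sup_ab := medianAtom_sup x y z
  sup_bc := by rw [medianAtom_sup, upperMedian_rotate]
  sup_ca := by rw [medianAtom_sup, upperMedian_rotate, upperMedian_rotate]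

theorem inf_sup_left_of_lowerMedian_eq_upperMedian {x y z : L}
    (h : lowerMedian x y z = upperMedian x y z) : x ⊓ (y ⊔ z) = x ⊓ y ⊔ x ⊓ z := by
  refine le_antisymm ?_ le_inf_sup
  have hle : x ⊓ (y ⊔ z) ≤ lowerMedian x y z := by
    rw [h]
    exact le_inf (le_inf (inf_le_left.trans le_sup_left) inf_le_right)
      (inf_le_left.trans le_sup_right)
  calc x ⊓ (y ⊔ z)
      ≤ (x ⊓ y ⊔ x ⊓ z ⊔ y ⊓ z) ⊓ x :=
      le_inf (hle.trans_eq (by unfold lowerMedian; ac_rfl)) inf_le_left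
    _ = x ⊓ y ⊔ x ⊓ z ⊔ y ⊓ z ⊓ x := sup_inf_assoc_of_le _ (sup_le inf_le_left inf_le_left)
    _ ≤ x ⊓ y ⊔ x ⊓ z :=
      sup_le le_rfl (le_sup_of_le_left (le_inf inf_le_right (inf_le_left.trans inf_le_left)))

theorem exists_isDiamond (hnd : ¬ ∀ x y z : L, x ⊓ (y ⊔ z) = (x ⊓ y) ⊔ (x ⊓ z)) :
    ∃ p a b c q : L, IsDiamond p a b c q := by
  push Not at hnd
  obtain ⟨x, y, z, h⟩ := hnd
  exact ⟨_, _, _, _, _, isDiamond_median (mt inf_sup_left_of_lowerMedian_eq_upperMedian h)⟩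

namespace IsDiamond

variable {p a b c q : L}

/- The new diamond is the median diamond of `a'`, `b`, `c`. -/
theorem exists_of_le {a' : L} (h : IsDiamond p a b c q) (hp : p < a') (ha : a' ≤ a) :
    ∃ b' c' q' : L, IsDiamond p a' b' c' q' := by
  have hinf_b : a' ⊓ b = p :=
    le_antisymm (h.inf_ab ▸ inf_le_inf_right b ha) (le_inf hp.le h.rotate.bot_lt.le)
  have hinf_c : c ⊓ a' = p :=
    le_antisymm (h.inf_ca ▸ inf_le_inf_left c ha) (le_inf h.rotate.rotate.bot_lt.le hp.le)
  have ha'q : a' ≤ b ⊔ c := by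
    rw [h.sup_bc, ← h.sup_ab]
    exact ha.trans le_sup_left
  have hlower : lowerMedian a' b c = p := by
    rw [lowerMedian, hinf_b, h.inf_bc, hinf_c, sup_idem, sup_idem]
  have hatom : medianAtom a' b c = a' := by
    rw [medianAtom, inf_eq_left.2 ha'q, h.inf_bc, sup_eq_left.2 hp.le]
  have hlt : lowerMedian a' b c < upperMedian a' b c := by
    rw [hlower]
    exact hp.trans_le (le_inf (le_inf le_sup_left ha'q) le_sup_right)
  have hdiamond := isDiamond_median hlt.ne
  rw [hlower, hatom] at hdiamond
  exact ⟨_, _, _, hdiamond⟩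

theorem second_covBy_top (h : IsDiamond p a b c q) (hpa : p ⋖ a) : b ⋖ q := by
  rw [← h.sup_ab]
  apply covBy_sup_of_inf_covBy_left
  rwa [h.inf_ab]

theorem bot_covBy_third (h : IsDiamond p a b c q) (hpa : p ⋖ a) : p ⋖ c := by
  rw [← h.inf_bc]
  apply inf_covBy_of_covBy_sup_left
  rw [h.sup_bc]
  exact h.second_covBy_top hpa

end IsDiamond

theorem exists_covering_diamond [IsStronglyAtomic L]
    (hnd : ¬ ∀ x y z : L, x ⊓ (y ⊔ z) = (x ⊓ y) ⊔ (x ⊓ z)) :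
    ∃ p a b c q : L, IsDiamond p a b c q ∧ p ⋖ a := by
  obtain ⟨p, a, b, c, q, h⟩ := exists_isDiamond hnd
  obtain ⟨a', hpa', ha'⟩ := exists_covBy_le_of_lt h.bot_lt
  obtain ⟨b', c', q', h'⟩ := h.exists_of_le hpa'.lt ha'
  exact ⟨p, a', b', c', q', h', hpa'⟩

end Diamond

/-! ### Coefficients of polynomials -/

section Coefficients

variable {R σ : Type*} [CommSemiring R]

theorem mdeg_eq_degree (m : σ →₀ ℕ) : mdeg m = m.degree :=
  rfl

theorem coeff_mul_of_isHomogeneous {m : σ →₀ ℕ} {f : MvPolynomial σ R}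
    (hf : f.IsHomogeneous m.degree) (h : MvPolynomial σ R) :
    coeff m (h * f) = coeff 0 h * coeff m f := by
  classical
  rw [coeff_mul, Finset.sum_eq_single_of_mem (0, m) (by simp)]
  rintro ⟨m₁, m₂⟩ hm hne
  rw [Finset.HasAntidiagonal.mem_antidiagonal] at hm
  refine mul_eq_zero_of_right _ (hf.coeff_eq_zero fun hdeg => hne ?_)
  have hm₁ : m₁ = 0 := by
    rw [← Finsupp.degree_eq_zero_iff]
    have hsum : m₁.degree + m₂.degree = m.degree := by rw [← map_add, hm]
    have hm₂ : m₂.degree = m.degree := hdeg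
    omega
  subst hm₁
  simpa using hm

theorem coeff_eq_zero_of_mem_span {G : Set (MvPolynomial σ R)} {m : σ →₀ ℕ}
    (hG : ∀ g ∈ G, g.IsHomogeneous m.degree) (hm : ∀ g ∈ G, coeff m g = 0)
    {f : MvPolynomial σ R} (hf : f ∈ Ideal.span G) : coeff m f = 0 := by
  suffices h : ∀ h, coeff m (h * f) = 0 by simpa using h 1
  induction hf using Submodule.span_induction with
  | mem g hg => exact fun h => by rw [coeff_mul_of_isHomogeneous (hG g hg), hm g hg, mul_zero]
  | zero => simp
  | add f g _ _ hf hg => exact fun h => by rw [mul_add, coeff_add, hf, hg, add_zero]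
  | smul r f _ hf => exact fun h => by rw [smul_eq_mul, ← mul_assoc, hf]

theorem isHomogeneous_X_mul_X_sub_X_mul_X {S : Type*} [CommRing S] (a b c d : σ) :
    (X a * X b - X c * X d : MvPolynomial σ S).IsHomogeneous 2 :=
  ((isHomogeneous_X S a).mul (isHomogeneous_X S b)).sub
    ((isHomogeneous_X S c).mul (isHomogeneous_X S d))

theorem coeff_X_mul_X [DecidableEq σ] (s t u v : σ) :
    coeff (Finsupp.single u 1 + Finsupp.single v 1) (X s * X t : MvPolynomial σ R) =
      if s(s, t) = s(u, v) then 1 else 0 := by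
  classical
  rw [X, X, monomial_mul, mul_one, coeff_monomial]
  refine if_congr ?_ rfl rfl
  rw [Finsupp.single_add_single_eq_single_add_single one_ne_zero one_ne_zero, Sym2.eq_iff]
  simp [eq_comm]

theorem exists_eq_single_add_single {m : σ →₀ ℕ} (hm : m.degree = 2) :
    ∃ u v, m = Finsupp.single u 1 + Finsupp.single v 1 := by
  classical
  have hcard : (Finsupp.toMultiset m).card = 2 := (Finsupp.card_toMultiset m).trans hm
  obtain ⟨u, v, huv⟩ := Multiset.card_eq_two.1 hcard
  refine ⟨u, v, Finsupp.orderIsoMultiset.injective ?_⟩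
  simpa using huv

theorem eq_or_eq_or_eq_of_single_le {u w a b : σ} {n : ℕ}
    (h : Finsupp.single u 1 ≤ Finsupp.single w n + (Finsupp.single a 1 + Finsupp.single b 1)) :
    u = w ∨ u = a ∨ u = b := by
  classical
  by_contra! hne
  have hu := h u
  simp [hne.1, hne.2.1, hne.2.2] at hu

theorem eq_add_or_eq_single_of_le {m : σ →₀ ℕ} {u v : σ}
    (h : m ≤ Finsupp.single u 1 + Finsupp.single v 1) :
    m = Finsupp.single u 1 + Finsupp.single v 1 ∨
      ∃ n, m = Finsupp.single u n ∨ m = Finsupp.single v n := by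
  classical
  have hm (w) (hwu : w ≠ u) (hwv : w ≠ v) : m w = 0 := by simpa [hwu, hwv] using h w
  by_cases hv : v ≠ u → m v = 0
  · refine .inr ⟨m u, .inl (Finsupp.support_subset_singleton.1 fun w hw => ?_)⟩
    grind
  by_cases hu : m u = 0
  · refine .inr ⟨m v, .inr (Finsupp.support_subset_singleton.1 fun w hw => ?_)⟩
    grind
  · refine .inl (le_antisymm h fun w => ?_)
    simp only [Finsupp.add_apply, Finsupp.single_apply]
    grind

theorem coeff_map_eq_zero {B : Type*}
    {φ : (B →₀ MvPolynomial σ R) →ₗ[MvPolynomial σ R] MvPolynomial σ R} {m : σ →₀ ℕ}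
    (hφ : ∀ b, ∀ m' ≤ m, coeff m' (φ (Finsupp.single b 1)) = 0) (t : B →₀ MvPolynomial σ R) :
    coeff m (φ t) = 0 := by
  classical
  induction t using Finsupp.induction_linear with
  | zero => simp
  | add t u ht hu => rw [map_add, coeff_add, ht, hu, add_zero]
  | single b f =>
    rw [← Finsupp.smul_single_one, map_smul, smul_eq_mul, coeff_mul]
    exact Finset.sum_eq_zero fun x hx => mul_eq_zero_of_right _
      (hφ b x.2 (le_add_self.trans_eq (Finset.HasAntidiagonal.mem_antidiagonal.1 hx)))

end Coefficients

/-! ### Graded free modules -/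

section GradedFreeModule

variable {R σ B B' : Type*} [CommSemiring R]

/-- Homogeneity of degree `n` in the graded free module over `R[x_s : s ∈ σ]` whose basis element
`b` has degree `deg b`. -/
def IsHomogeneousVec (deg : B → ℕ) (n : ℕ) (t : B →₀ MvPolynomial σ R) : Prop :=
  ∀ b, ∀ m ∈ (t b).support, mdeg m + deg b = n

/-- The homogeneous component of degree `n` of an element of a graded free module. -/
noncomputable def vecComponent (deg : B → ℕ) (n : ℕ) :
    (B →₀ MvPolynomial σ R) →ₗ[R] (B →₀ MvPolynomial σ R) :=
  Finsupp.lsum R fun b =>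
    Finsupp.lsingle b ∘ₗ if deg b ≤ n then homogeneousComponent (n - deg b) else 0

theorem vecComponent_apply (deg : B → ℕ) (n : ℕ) (t : B →₀ MvPolynomial σ R) (b : B) :
    vecComponent deg n t b = if deg b ≤ n then homogeneousComponent (n - deg b) (t b) else 0 := by
  classical
  induction t using Finsupp.induction_linear with
  | zero => simp
  | add t u ht hu =>
    rw [map_add, Finsupp.add_apply, ht, hu, Finsupp.add_apply]
    split_ifs <;> simp
  | single c f =>
    by_cases hcb : c = b
    · subst hcb
      simp only [vecComponent, Finsupp.lsum_single, LinearMap.comp_apply, Finsupp.lsingle_apply,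
        Finsupp.single_eq_same]
      split_ifs <;> rfl
    · simp [vecComponent, Finsupp.single_eq_of_ne' hcb]

theorem coeff_vecComponent (deg : B → ℕ) (n : ℕ) (t : B →₀ MvPolynomial σ R) (b : B)
    (m : σ →₀ ℕ) :
    coeff m (vecComponent deg n t b) = if mdeg m + deg b = n then coeff m (t b) else 0 := by
  rw [vecComponent_apply, mdeg_eq_degree]
  split_ifs with hle hm hm
  · rw [coeff_homogeneousComponent, if_pos (by omega)]
  · rw [coeff_homogeneousComponent, if_neg (by omega)]
  · omega
  · exact coeff_zero m

theorem isHomogeneousVec_vecComponent (deg : B → ℕ) (n : ℕ) (t : B →₀ MvPolynomial σ R) :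
    IsHomogeneousVec deg n (vecComponent deg n t) := by
  intro b m hm
  rw [mem_support_iff, coeff_vecComponent] at hm
  exact (ite_ne_right_iff.1 hm).1

theorem IsHomogeneousVec.vecComponent_eq {deg : B → ℕ} {k : ℕ} {t : B →₀ MvPolynomial σ R}
    (ht : IsHomogeneousVec deg k t) (n : ℕ) :
    vecComponent deg n t = if k = n then t else 0 := by
  ext b m
  rw [coeff_vecComponent]
  by_cases hm : coeff m (t b) = 0
  · split_ifs <;> simp [hm]
  · rw [ht b m (mem_support_iff.2 hm)]
    split_ifs <;> simp

theorem exists_eq_sum_vecComponent (deg : B → ℕ) (t : B →₀ MvPolynomial σ R) :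
    ∃ N : ℕ, t = ∑ n ∈ Finset.range N, vecComponent deg n t := by
  classical
  refine ⟨t.support.sup (fun b => (t b).support.sup fun m => mdeg m + deg b) + 1, ?_⟩
  ext b m
  simp only [Finsupp.finsetSum_apply, coeff_sum, coeff_vecComponent, Finset.sum_ite_eq,
    Finset.mem_range, Nat.lt_succ_iff]
  split_ifs with hle
  · rfl
  · by_contra hm
    refine hle ((Finset.le_sup (f := fun m => mdeg m + deg b) (mem_support_iff.2 hm)).trans
      (Finset.le_sup (f := fun b => (t b).support.sup fun m => mdeg m + deg b) ?_))
    exact Finsupp.mem_support_iff.2 fun hb => hm (by rw [hb, coeff_zero])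

theorem IsHomogeneousVec.monomial_smul {deg : B → ℕ} {k : ℕ} {t : B →₀ MvPolynomial σ R}
    (ht : IsHomogeneousVec deg k t) (m : σ →₀ ℕ) (r : R) :
    IsHomogeneousVec deg (mdeg m + k) (monomial m r • t) := by
  classical
  intro b m' hm'
  rw [mem_support_iff, Finsupp.smul_apply, smul_eq_mul, coeff_monomial_mul', ite_ne_right_iff]
    at hm'
  obtain ⟨m₂, rfl⟩ := exists_add_of_le hm'.1
  rw [add_tsub_cancel_left] at hm'
  have hm₂ := ht b m₂ (mem_support_iff.2 (right_ne_zero_of_mul hm'.2))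
  rw [mdeg_eq_degree, map_add, add_assoc, ← mdeg_eq_degree m₂, hm₂, mdeg_eq_degree]

theorem isHomogeneousVec_single {deg : B → ℕ} {n : ℕ} {f : MvPolynomial σ R}
    (hf : f.IsHomogeneous n) (b : B) : IsHomogeneousVec deg (n + deg b) (Finsupp.single b f) := by
  classical
  intro c m hm
  rw [mem_support_iff, Finsupp.single_apply] at hm
  split_ifs at hm with hbc
  · rw [← hbc, ← show mdeg m = n from not_imp_comm.1 hf.coeff_eq_zero hm]
  · exact absurd (coeff_zero m) hm

theorem map_vecComponent {deg : B → ℕ} {deg' : B' → ℕ}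
    (φ : (B →₀ MvPolynomial σ R) →ₗ[MvPolynomial σ R] (B' →₀ MvPolynomial σ R))
    (hφ : ∀ b, IsHomogeneousVec deg' (deg b) (φ (Finsupp.single b 1))) (n : ℕ)
    (t : B →₀ MvPolynomial σ R) :
    φ (vecComponent deg n t) = vecComponent deg' n (φ t) := by
  suffices h : φ.restrictScalars R ∘ₗ vecComponent deg n =
      vecComponent deg' n ∘ₗ φ.restrictScalars R from LinearMap.congr_fun h t
  refine Finsupp.lhom_ext fun b f => ?_
  induction f using MvPolynomial.induction_on' with
  | add f g hf hg => rw [Finsupp.single_add, map_add, map_add, hf, hg]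
  | monomial m r =>
    have hb : IsHomogeneousVec deg (deg b) (Finsupp.single b (1 : MvPolynomial σ R)) := by
      simpa using isHomogeneousVec_single (deg := deg) (isHomogeneous_one σ R) b
    simp only [LinearMap.comp_apply, LinearMap.restrictScalars_apply]
    rw [← Finsupp.smul_single_one, (hb.monomial_smul m r).vecComponent_eq, map_smul φ,
      ((hφ b).monomial_smul m r).vecComponent_eq, apply_ite φ, map_smul, map_zero]

theorem exists_irredundant_homogeneous_generators {deg : B → ℕ}
    {N : Submodule (MvPolynomial σ R) (B →₀ MvPolynomial σ R)} (hfg : N.FG)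
    (hN : ∀ t ∈ N, ∀ k, vecComponent deg k t ∈ N) :
    ∃ (n : ℕ) (deg' : Fin n → ℕ) (g : Fin n → (B →₀ MvPolynomial σ R)),
      (∀ b, IsHomogeneousVec deg (deg' b) (g b)) ∧
        Submodule.span (MvPolynomial σ R) (Set.range g) = N ∧
        ∀ c, g c ∉ Submodule.span (MvPolynomial σ R) (g '' {c}ᶜ) := by
  classical
  have hspan : Submodule.span (MvPolynomial σ R) {t | t ∈ N ∧ ∃ k, IsHomogeneousVec deg k t} = N :=
    le_antisymm (Submodule.span_le.2 fun t ht => ht.1) fun t ht => by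
      obtain ⟨M, hM⟩ := exists_eq_sum_vecComponent deg t
      rw [hM]
      exact Submodule.sum_mem _ fun k _ =>
        Submodule.subset_span ⟨hN t ht k, k, isHomogeneousVec_vecComponent deg k t⟩
  rw [← hspan, Submodule.fg_span_iff_fg_span_finset_subset] at hfg
  obtain ⟨s₀, hs₀, hs₀N⟩ := hfg
  obtain ⟨s, ⟨hs, hsN⟩, hmin⟩ := exists_minimal_of_wellFoundedLT
    (fun s : Finset (B →₀ MvPolynomial σ R) => (∀ t ∈ s, ∃ k, IsHomogeneousVec deg k t) ∧
      Submodule.span (MvPolynomial σ R) (s : Set (B →₀ MvPolynomial σ R)) = N)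
    ⟨s₀, fun t ht => (hs₀ ht).2, hs₀N.symm.trans hspan⟩
  let g : Fin s.card → (B →₀ MvPolynomial σ R) := fun b => s.equivFin.symm b
  choose deg' hdeg' using fun b : Fin s.card => hs (g b) (s.equivFin.symm b).2
  have hrange : Set.range g = s := by
    rw [show g = Subtype.val ∘ s.equivFin.symm from rfl, s.equivFin.symm.surjective.range_comp,
      Subtype.range_coe]
  refine ⟨s.card, deg', g, hdeg', hrange ▸ hsN, fun c hc => ?_⟩
  have hginj : Function.Injective g := Subtype.val_injective.comp s.equivFin.symm.injective
  have himage : g '' {c}ᶜ = ↑(s.erase (g c)) := by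
    rw [Set.image_compl_eq_range_sdiff_image hginj, hrange, Set.image_singleton, Finset.coe_erase]
  have hgc : g c ∈ s := (s.equivFin.symm c).2
  have herase : Submodule.span (MvPolynomial σ R)
      (↑(s.erase (g c)) : Set (B →₀ MvPolynomial σ R)) = N := by
    rw [← hsN, ← Finset.insert_erase hgc, Finset.coe_insert, Finset.erase_insert_eq_erase,
      Finset.erase_idem, Submodule.span_insert_eq_span (himage ▸ hc)]
  exact Finset.notMem_erase (g c) s
    (hmin ⟨fun t ht => hs t (Finset.mem_of_mem_erase ht), herase⟩ (s.erase_subset _) hgc)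

end GradedFreeModule

/-! ### Existence of minimal graded free resolutions -/

theorem smul_mem_span_image_compl {R M ι : Type*} [Ring R] [AddCommGroup M] [Module R M]
    {g : ι → M} {t : ι →₀ R} (ht : Finsupp.linearCombination R g t = 0) (c : ι) :
    t c • g c ∈ Submodule.span R (g '' {c}ᶜ) := by
  classical
  have hsplit := congrArg (Finsupp.linearCombination R g) (t.single_add_erase c)
  rw [map_add, ht, Finsupp.linearCombination_single] at hsplit
  rw [eq_neg_of_add_eq_zero_left hsplit]
  refine Submodule.neg_mem _ ((Finsupp.mem_span_image_iff_linearCombination R).2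
    ⟨t.erase c, ?_, rfl⟩)
  rw [Finsupp.mem_supported, Finsupp.support_erase]
  exact fun b hb => (Finset.mem_erase.1 hb).1

section Existence

variable {K σ B : Type*} [Field K]

/- Graded Nakayama: a relation with a nonzero constant coefficient at `c` may be replaced by its
component of degree `deg' c`, whose coefficient at `c` is that constant, and solved for `g c`. -/
theorem coeff_zero_eq_zero_of_linearCombination_eq_zero_s17 {ι : Type*} {deg : B → ℕ} {deg' : ι → ℕ}
    {g : ι → (B →₀ MvPolynomial σ K)} (hg : ∀ b, IsHomogeneousVec deg (deg' b) (g b))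
    {c : ι} (hirr : g c ∉ Submodule.span (MvPolynomial σ K) (g '' {c}ᶜ))
    {t : ι →₀ MvPolynomial σ K} (ht : Finsupp.linearCombination (MvPolynomial σ K) g t = 0) :
    coeff 0 (t c) = 0 := by
  by_contra hne
  have hcomp :
      Finsupp.linearCombination (MvPolynomial σ K) g (vecComponent deg' (deg' c) t) = 0 := by
    rw [map_vecComponent (deg' := deg) _ (fun b => by simpa using hg b), ht, map_zero]
  have hmem := smul_mem_span_image_compl hcomp c
  rw [vecComponent_apply, if_pos le_rfl, tsub_self, homogeneousComponent_zero] at hmem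
  exact hirr ((Submodule.smul_mem_iff_of_isUnit _ ((isUnit_iff_ne_zero.2 hne).map C)).1 hmem)

/-- A step in the construction of a minimal graded free resolution: a graded submodule `N` of `𝔪 F`,
where `F` is free with basis elements of degrees `deg 0, …, deg (n - 1)`; the next free module has
to cover `N`. -/
structure SyzygyStage_s17 (K : Type*) [Field K] (σ : Type*) where
  n : ℕ
  deg : Fin n → ℕ
  N : Submodule (MvPolynomial σ K) (Fin n →₀ MvPolynomial σ K)
  graded : ∀ t ∈ N, ∀ k, vecComponent deg k t ∈ N
  minimal : ∀ t ∈ N, ∀ c, coeff 0 (t c) = 0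

theorem SyzygyStage_s17.exists_next [Finite σ] (s : SyzygyStage_s17 K σ) :
    ∃ s' : SyzygyStage_s17 K σ, ∃ d : (Fin s'.n →₀ MvPolynomial σ K) →ₗ[MvPolynomial σ K]
        (Fin s.n →₀ MvPolynomial σ K),
      LinearMap.range d = s.N ∧ LinearMap.ker d = s'.N ∧
        ∀ b, IsHomogeneousVec s.deg (s'.deg b) (d (Finsupp.single b 1)) := by
  obtain ⟨n, deg, g, hg, hspan, hirr⟩ :=
    exists_irredundant_homogeneous_generators (IsNoetherian.noetherian s.N) s.graded
  let d := Finsupp.linearCombination (MvPolynomial σ K) g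
  have hd (b) : IsHomogeneousVec s.deg (deg b) (d (Finsupp.single b 1)) := by
    simpa [d] using hg b
  exact ⟨{ n, deg
           N := LinearMap.ker d
           graded := fun t ht k => by
             rw [LinearMap.mem_ker, map_vecComponent d hd, LinearMap.mem_ker.1 ht, map_zero]
           minimal := fun t ht c =>
             coeff_zero_eq_zero_of_linearCombination_eq_zero_s17 hg (hirr c) ht },
    d, (Finsupp.range_linearCombination _).trans hspan, rfl, hd⟩

/-- The first step of the resolution of `S/I`: the ideal `I` inside the free module of rank one. -/
noncomputable def SyzygyStage_s17.ofIdeal (I : Ideal (MvPolynomial σ K))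
    (hI : ∀ f ∈ I, ∀ k, homogeneousComponent k f ∈ I) (hI₀ : I ≤ RingHom.ker constantCoeff) :
    SyzygyStage_s17 K σ where
  n := 1
  deg _ := 0
  N := Submodule.comap (Finsupp.lapply 0) I
  graded t ht k := by
    rw [Submodule.mem_comap, Finsupp.lapply_apply, vecComponent_apply, if_pos k.zero_le, tsub_zero]
    exact hI _ ht k
  minimal t ht c := by
    rw [Subsingleton.elim c 0]
    exact hI₀ ht

theorem exists_minGradedFreeRes [Finite σ] (I : Ideal (MvPolynomial σ K))
    (hI : ∀ f ∈ I, ∀ k, homogeneousComponent k f ∈ I) (hI₀ : I ≤ RingHom.ker constantCoeff) :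
    Nonempty (MinGradedFreeRes K σ I) := by
  choose next d hrange hker hdeg using SyzygyStage_s17.exists_next (K := K) (σ := σ)
  let stage : ℕ → SyzygyStage_s17 K σ := Nat.rec (.ofIdeal I hI hI₀) fun _ s => next s
  let ε : (Fin 1 →₀ MvPolynomial σ K) →ₗ[MvPolynomial σ K] MvPolynomial σ K := Finsupp.lapply 0
  have hε (b : Fin 1) : (ε (Finsupp.single b 1)).IsHomogeneous 0 := by
    rw [Subsingleton.elim b 0, Finsupp.lapply_apply, Finsupp.single_eq_same]
    exact isHomogeneous_one σ K
  have hsurj (s : MvPolynomial σ K) : ∃ t, ε t - s ∈ I := ⟨Finsupp.single 0 s, by simp [ε]⟩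
  exact ⟨{
    B := fun i => Fin (stage i).n
    finB := fun i => inferInstance
    deg := fun i => (stage i).deg
    d := fun i => d (stage i)
    ε := ε
    ε_homog := hε
    surj := hsurj
    exact0 := hrange (stage 0)
    exact := fun i => (hrange (stage (i + 1))).trans (hker (stage i)).symm
    homog := fun i b c => hdeg (stage i) b c
    minimal := fun i b c =>
      (stage i).minimal _ (hrange (stage i) ▸ LinearMap.mem_range_self _ _) c }⟩

end Existence

/-! ### The first two steps of a minimal graded free resolution -/

namespace MinGradedFreeRes

variable {K σ : Type*} [Field K] {I : Ideal (MvPolynomial σ K)} (F : MinGradedFreeRes K σ I)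

theorem coeff_zero_d (i : ℕ) (t : F.B (i + 1) →₀ MvPolynomial σ K) (c : F.B i) :
    coeff 0 (F.d i t c) = 0 :=
  coeff_map_eq_zero (φ := Finsupp.lapply c ∘ₗ F.d i)
    (fun b _ hm => nonpos_iff_eq_zero.1 hm ▸ F.minimal i b c) t

theorem exists_ε_single_eq_C (hI : I ≤ RingHom.ker constantCoeff) :
    ∃ (b₀ : F.B 0) (k : K), k ≠ 0 ∧ F.deg 0 b₀ = 0 ∧ F.ε (Finsupp.single b₀ 1) = C k := by
  obtain ⟨t, ht⟩ := F.surj 1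
  have hεt : constantCoeff (F.ε t) ≠ 0 := by
    have h := hI ht
    rw [RingHom.mem_ker, map_sub, map_one, sub_eq_zero] at h
    exact h ▸ one_ne_zero
  obtain ⟨b₀, hb₀⟩ : ∃ b, coeff 0 (F.ε (Finsupp.single b 1)) ≠ 0 := by
    by_contra! hε
    exact hεt (coeff_map_eq_zero (fun b _ hm => nonpos_iff_eq_zero.1 hm ▸ hε b) t)
  have hdeg : F.deg 0 b₀ = 0 := by simpa using (F.ε_homog b₀ hb₀).symm
  refine ⟨b₀, _, hb₀, hdeg, ?_⟩
  have hhom := F.ε_homog b₀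
  rw [hdeg] at hhom
  exact totalDegree_eq_zero_iff_eq_C.1 (Nat.le_zero.1 hhom.totalDegree_le)

/- If `b ≠ b₀`, subtracting a multiple of `b₀` from `b` gives a relation whose `b`-coefficient is a
unit, against minimality. -/
theorem eq_of_ε_single_eq_C {b₀ : F.B 0} {k : K} (hk : k ≠ 0)
    (hb₀ : F.ε (Finsupp.single b₀ 1) = C k) (b : F.B 0) : b = b₀ := by
  by_contra hne
  let f := F.ε (Finsupp.single b 1)
  have hrel : F.ε (Finsupp.single b 1 - Finsupp.single b₀ (C k⁻¹ * f)) = 0 := by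
    rw [← Finsupp.smul_single_one b₀, map_sub, map_smul, hb₀, smul_eq_mul, mul_right_comm, ← C_mul,
      inv_mul_cancel₀ hk, C_1, one_mul, sub_self]
  obtain ⟨r, hr⟩ :
      Finsupp.single b 1 - Finsupp.single b₀ (C k⁻¹ * f) ∈ LinearMap.range (F.d 0) := by
    rw [F.exact0, Submodule.mem_comap, hrel]
    exact zero_mem _
  have hcoeff := F.coeff_zero_d 0 r b
  rw [hr] at hcoeff
  simp [Finsupp.single_eq_of_ne hne] at hcoeff

theorem exists_ε_eq (hI : I ≤ RingHom.ker constantCoeff) :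
    ∃ (b₀ : F.B 0) (k : K), k ≠ 0 ∧ F.deg 0 b₀ = 0 ∧ (∀ b, b = b₀) ∧ ∀ t, F.ε t = C k * t b₀ := by
  obtain ⟨b₀, k, hk, hdeg, hb₀⟩ := F.exists_ε_single_eq_C hI
  have huniq := F.eq_of_ε_single_eq_C hk hb₀
  refine ⟨b₀, k, hk, hdeg, huniq, fun t => ?_⟩
  have ht : t = t b₀ • Finsupp.single b₀ 1 := by
    ext1 b
    simp [huniq b]
  conv_lhs => rw [ht]
  rw [map_smul, hb₀, smul_eq_mul, mul_comm]

/-- The presentation `F₁ → F₀ ≅ S` of the ideal `I` by its minimal generators. -/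
noncomputable def presentation :
    (F.B 1 →₀ MvPolynomial σ K) →ₗ[MvPolynomial σ K] MvPolynomial σ K :=
  F.ε ∘ₗ F.d 0

theorem presentation_mem (t : F.B 1 →₀ MvPolynomial σ K) : F.presentation t ∈ I := by
  have h : F.d 0 t ∈ LinearMap.range (F.d 0) := LinearMap.mem_range_self _ t
  rwa [F.exact0] at h

theorem presentation_d_one (s : F.B 2 →₀ MvPolynomial σ K) : F.presentation (F.d 1 s) = 0 := by
  have h : F.d 1 s ∈ LinearMap.ker (F.d 0) := F.exact 0 ▸ LinearMap.mem_range_self _ s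
  rw [presentation, LinearMap.comp_apply, LinearMap.mem_ker.1 h, map_zero]

theorem exists_d_one_eq (hI : I ≤ RingHom.ker constantCoeff) {t : F.B 1 →₀ MvPolynomial σ K}
    (ht : F.presentation t = 0) : ∃ s, F.d 1 s = t := by
  obtain ⟨b₀, k, hk, -, huniq, hε⟩ := F.exists_ε_eq hI
  rw [← LinearMap.mem_range, F.exact 0, LinearMap.mem_ker]
  ext1 b
  rw [presentation, LinearMap.comp_apply, hε, mul_eq_zero, C_eq_zero] at ht
  rw [huniq b, ht.resolve_left hk, Finsupp.zero_apply]

theorem isHomogeneous_presentation_single (hI : I ≤ RingHom.ker constantCoeff) (x : F.B 1) :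
    (F.presentation (Finsupp.single x 1)).IsHomogeneous (F.deg 1 x) := by
  obtain ⟨b₀, k, -, hdeg, -, hε⟩ := F.exists_ε_eq hI
  have hd : (F.d 0 (Finsupp.single x 1) b₀).IsHomogeneous (F.deg 1 x) := by
    refine fun m hm => ?_
    rw [← F.homog 0 x b₀ m (mem_support_iff.2 hm), hdeg, add_zero, Pi.one_def,
      ← Finsupp.degree_eq_weight_one, mdeg_eq_degree]
  rw [presentation, LinearMap.comp_apply, hε, ← zero_add (F.deg 1 x)]
  exact (isHomogeneous_C σ k).mul hd

theorem exists_isHomogeneousVec_presentation_eq (hI : I ≤ RingHom.ker constantCoeff)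
    {f : MvPolynomial σ K} (hfI : f ∈ I) {n : ℕ} (hf : f.IsHomogeneous n) :
    ∃ t, F.presentation t = f ∧ IsHomogeneousVec (F.deg 1) n t := by
  obtain ⟨b₀, k, hk, hdeg, -, hε⟩ := F.exists_ε_eq hI
  have hεf : F.ε (Finsupp.single b₀ (C k⁻¹ * f)) = f := by
    rw [hε, Finsupp.single_eq_same, ← mul_assoc, ← C_mul, mul_inv_cancel₀ hk, C_1, one_mul]
  obtain ⟨t, ht⟩ : Finsupp.single b₀ (C k⁻¹ * f) ∈ LinearMap.range (F.d 0) := by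
    rwa [F.exact0, Submodule.mem_comap, hεf]
  refine ⟨vecComponent (F.deg 1) n t, ?_, isHomogeneousVec_vecComponent _ _ _⟩
  have hhom := isHomogeneousVec_single (deg := F.deg 0) ((isHomogeneous_C σ k⁻¹).mul hf) b₀
  rw [zero_add, hdeg, add_zero] at hhom
  rw [presentation, LinearMap.comp_apply, map_vecComponent (F.d 0) (F.homog 0), ht,
    hhom.vecComponent_eq, if_pos rfl, hεf]

theorem deg_one_eq {G : Set (MvPolynomial σ K)} (hG : I = Ideal.span G) {n : ℕ}
    (hn : ∀ f ∈ G, f.IsHomogeneous n) (hI : I ≤ RingHom.ker constantCoeff) (x : F.B 1) :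
    F.deg 1 x = n := by
  subst hG
  by_contra hx
  have hlift : ∀ f ∈ Ideal.span G, ∃ t, F.presentation t = f ∧ coeff 0 (t x) = 0 := by
    intro f hf
    induction hf using Submodule.span_induction with
    | mem f hf =>
      obtain ⟨t, htf, ht⟩ :=
        F.exists_isHomogeneousVec_presentation_eq hI (Ideal.subset_span hf) (hn f hf)
      refine ⟨t, htf, by_contra fun h => hx ?_⟩
      simpa [mdeg_eq_degree] using ht x 0 (mem_support_iff.2 h)
    | zero => exact ⟨0, map_zero _, coeff_zero 0⟩
    | add f g _ _ hf hg =>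
      obtain ⟨t, rfl, ht⟩ := hf
      obtain ⟨u, rfl, hu⟩ := hg
      exact ⟨t + u, map_add _ t u, by rw [Finsupp.add_apply, coeff_add, ht, hu, add_zero]⟩
    | smul r f _ hf =>
      obtain ⟨t, rfl, ht⟩ := hf
      refine ⟨r • t, map_smul _ r t, ?_⟩
      rw [Finsupp.smul_apply, smul_eq_mul, ← constantCoeff_eq, map_mul, constantCoeff_eq, ht,
        mul_zero]
  obtain ⟨t, htx, ht⟩ := hlift _ (F.presentation_mem (Finsupp.single x 1))
  obtain ⟨s, hs⟩ := F.exists_d_one_eq hI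
    (show F.presentation (Finsupp.single x 1 - t) = 0 by rw [map_sub, htx, sub_self])
  have hcoeff := F.coeff_zero_d 1 s x
  simp [hs, ht] at hcoeff

end MinGradedFreeRes

/-! ### Join-meet ideals -/

section JoinMeetIdeal

variable {K L : Type*} [Field K] [Lattice L]

theorem joinMeetIdeal_le_ker_constantCoeff :
    joinMeetIdeal K L ≤ RingHom.ker (constantCoeff (R := K) (σ := L)) := by
  rw [joinMeetIdeal, Ideal.span_le]
  rintro _ ⟨a, b, -, -, rfl⟩
  simp

theorem homogeneousComponent_mem_joinMeetIdeal (f : MvPolynomial L K) (hf : f ∈ joinMeetIdeal K L)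
    (k : ℕ) : homogeneousComponent k f ∈ joinMeetIdeal K L := by
  let := MvPolynomial.gradedAlgebra (σ := L) (R := K)
  have : (joinMeetIdeal K L).IsHomogeneous (homogeneousSubmodule L K) := by
    refine Ideal.homogeneous_span _ _ ?_
    rintro _ ⟨a, b, -, -, rfl⟩
    exact ⟨2, isHomogeneous_X_mul_X_sub_X_mul_X a b (a ⊓ b) (a ⊔ b)⟩
  exact (mem_iff_homogeneousComponent_mem this f).1 hf k

theorem IsDiamond.mem_joinMeetIdeal {p a b c q : L} (h : IsDiamond p a b c q) :
    (X a * X b - X p * X q : MvPolynomial L K) ∈ joinMeetIdeal K L :=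
  Ideal.subset_span ⟨a, b, h.not_le, h.not_ge, by rw [h.inf_ab, h.sup_ab]⟩

theorem coeff_eq_zero_of_mem_joinMeetIdeal {f : MvPolynomial L K} (hf : f ∈ joinMeetIdeal K L)
    {u v : L} (huv : u ⩿ v) : coeff (Finsupp.single u 1 + Finsupp.single v 1) f = 0 := by
  classical
  refine coeff_eq_zero_of_mem_span ?_ ?_ hf
  · rintro _ ⟨a, b, -, -, rfl⟩
    simpa using isHomogeneous_X_mul_X_sub_X_mul_X a b (a ⊓ b) (a ⊔ b)
  · rintro _ ⟨a, b, hab, hba, rfl⟩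
    rw [coeff_sub, coeff_X_mul_X, coeff_X_mul_X, if_neg, if_neg, sub_zero]
    · rw [Sym2.eq_iff]
      rintro (⟨rfl, rfl⟩ | ⟨rfl, rfl⟩)
      · exact huv.2 (inf_lt_left.2 hab) (left_lt_sup.2 hba)
      · exact hab ((le_sup_left.trans huv.1).trans inf_le_right)
    · rw [Sym2.eq_iff]
      rintro (⟨rfl, rfl⟩ | ⟨rfl, rfl⟩)
      · exact hab huv.1
      · exact hba huv.1

theorem coeff_mul_of_mem_joinMeetIdeal {f : MvPolynomial L K} (hf : f ∈ joinMeetIdeal K L)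
    (hf₂ : f.IsHomogeneous 2) {w a b : L} (ha : w ⩿ a ∨ a ⩿ w) (hb : w ⩿ b ∨ b ⩿ w) (n : ℕ)
    (h : MvPolynomial L K) :
    coeff (Finsupp.single w n + (Finsupp.single a 1 + Finsupp.single b 1)) (h * f) =
      coeff (Finsupp.single w n) h * coeff (Finsupp.single a 1 + Finsupp.single b 1) f := by
  classical
  rw [coeff_mul, Finset.sum_eq_single_of_mem
    (Finsupp.single w n, Finsupp.single a 1 + Finsupp.single b 1)
    (Finset.HasAntidiagonal.mem_antidiagonal.2 rfl)]
  rintro ⟨m₁, m₂⟩ hm hne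
  replace hm : m₁ + m₂ = Finsupp.single w n + (Finsupp.single a 1 + Finsupp.single b 1) :=
    Finset.HasAntidiagonal.mem_antidiagonal.1 hm
  refine mul_eq_zero_of_right _ (by_contra fun hm₂ => ?_)
  obtain ⟨u, v, rfl⟩ := exists_eq_single_add_single (not_imp_comm.1 hf₂.coeff_eq_zero hm₂)
  have hzero {u v : L} (huv : u ⩿ v ∨ v ⩿ u) :
      coeff (Finsupp.single u 1 + Finsupp.single v 1) f = 0 :=
    huv.elim (coeff_eq_zero_of_mem_joinMeetIdeal hf) fun hvu =>
      add_comm (Finsupp.single v 1) _ ▸ coeff_eq_zero_of_mem_joinMeetIdeal hf hvu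
  have hpair : Finsupp.single u 1 + Finsupp.single v 1 ≠ Finsupp.single a 1 + Finsupp.single b 1 :=
    fun h => hne (by rw [h] at hm ⊢; rw [add_right_cancel hm])
  have hle := le_add_self.trans_eq hm
  rcases eq_or_eq_or_eq_of_single_le (le_self_add.trans hle) with rfl | rfl | rfl <;>
    rcases eq_or_eq_or_eq_of_single_le (le_add_self.trans hle) with rfl | rfl | rfl
  · exact hm₂ (hzero (.inl .rfl))
  · exact hm₂ (hzero ha)
  · exact hm₂ (hzero hb)
  · exact hm₂ (hzero ha.symm)
  · exact hm₂ (hzero (.inl .rfl))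
  · exact hpair rfl
  · exact hm₂ (hzero hb.symm)
  · exact hpair (add_comm _ _)
  · exact hm₂ (hzero (.inl .rfl))

end JoinMeetIdeal

namespace MinGradedFreeRes

section Coord

variable {K σ : Type*} [Field K] {I : Ideal (MvPolynomial σ K)} (F : MinGradedFreeRes K σ I)

/-- The map `F₁ → S` sending each basis element to the coefficient of the monomial `m` in the
corresponding minimal generator of `I`. When exactly one generator of a generating set of the same
degree involves `m`, this is the coordinate of `F₁` along that generator. -/
noncomputable def coord (m : σ →₀ ℕ) :
    (F.B 1 →₀ MvPolynomial σ K) →ₗ[MvPolynomial σ K] MvPolynomial σ K :=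
  Finsupp.linearCombination (MvPolynomial σ K) fun x =>
    C (coeff m (F.presentation (Finsupp.single x 1)))

theorem exists_coeff_ne_zero_of_coeff_coord_ne_zero {m k : σ →₀ ℕ} {t : F.B 1 →₀ MvPolynomial σ K}
    (h : coeff k (F.coord m t) ≠ 0) : ∃ x, coeff k (t x) ≠ 0 := by
  contrapose! h
  rw [coord, Finsupp.linearCombination_apply, Finsupp.sum, coeff_sum]
  exact Finset.sum_eq_zero fun x _ => by
    rw [smul_eq_mul, mul_comm, coeff_C_mul, h x, mul_zero]

end Coord

section JoinMeetIdeal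

variable {K L : Type*} [Field K] [Lattice L] (F : MinGradedFreeRes K L (joinMeetIdeal K L))

theorem deg_one_joinMeetIdeal (x : F.B 1) : F.deg 1 x = 2 := by
  refine F.deg_one_eq rfl ?_ joinMeetIdeal_le_ker_constantCoeff x
  rintro _ ⟨a, b, -, -, rfl⟩
  exact isHomogeneous_X_mul_X_sub_X_mul_X a b (a ⊓ b) (a ⊔ b)

theorem coeff_presentation {w a b : L} (ha : w ⩿ a ∨ a ⩿ w) (hb : w ⩿ b ∨ b ⩿ w) (n : ℕ)
    (t : F.B 1 →₀ MvPolynomial L K) :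
    coeff (Finsupp.single w n + (Finsupp.single a 1 + Finsupp.single b 1)) (F.presentation t) =
      coeff (Finsupp.single w n) (F.coord (Finsupp.single a 1 + Finsupp.single b 1) t) := by
  induction t using Finsupp.induction_linear with
  | zero => simp
  | add t u ht hu => rw [map_add, map_add, coeff_add, coeff_add, ht, hu]
  | single x f =>
    have hx := F.isHomogeneous_presentation_single joinMeetIdeal_le_ker_constantCoeff x
    rw [F.deg_one_joinMeetIdeal x] at hx
    rw [← Finsupp.smul_single_one x, map_smul, smul_eq_mul,
      coeff_mul_of_mem_joinMeetIdeal (F.presentation_mem _) hx ha hb, map_smul, coord,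
      Finsupp.linearCombination_single, one_smul, smul_eq_mul,
      mul_comm f (C _), coeff_C_mul, mul_comm]

theorem coeff_single_coord_d_one {w a b : L} (ha : w ⩿ a ∨ a ⩿ w) (hb : w ⩿ b ∨ b ⩿ w) (n : ℕ)
    (s : F.B 2 →₀ MvPolynomial L K) :
    coeff (Finsupp.single w n)
      (F.coord (Finsupp.single a 1 + Finsupp.single b 1) (F.d 1 s)) = 0 := by
  rw [← F.coeff_presentation ha hb, F.presentation_d_one, coeff_zero]

/- The relation is the Koszul syzygy of the generators belonging to the pairs `a, b` and `c, a`. -/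
theorem exists_presentation_eq_zero_and_coeff_coord_eq_one {p a b c q : L}
    (h : IsDiamond p a b c q) (hpa : p ⩿ a) (hpb : p ⩿ b) :
    ∃ t, F.presentation t = 0 ∧ coeff (Finsupp.single p 1 + Finsupp.single q 1)
      (F.coord (Finsupp.single a 1 + Finsupp.single b 1) t) = 1 := by
  classical
  have hpq : p ≠ a ∧ p ≠ b ∧ p ≠ c :=
    ⟨h.bot_lt.ne, h.rotate.bot_lt.ne, h.rotate.rotate.bot_lt.ne⟩
  let f : MvPolynomial L K := X a * X b - X p * X q
  let g : MvPolynomial L K := X c * X a - X p * X q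
  have hf : f.IsHomogeneous 2 := isHomogeneous_X_mul_X_sub_X_mul_X a b p q
  have hg : g.IsHomogeneous 2 := isHomogeneous_X_mul_X_sub_X_mul_X c a p q
  obtain ⟨t, ht, -⟩ := F.exists_isHomogeneousVec_presentation_eq
    joinMeetIdeal_le_ker_constantCoeff h.mem_joinMeetIdeal hf
  obtain ⟨u, hu, -⟩ := F.exists_isHomogeneousVec_presentation_eq
    joinMeetIdeal_le_ker_constantCoeff h.rotate.rotate.mem_joinMeetIdeal hg
  have hcoord (s) : coeff 0 (F.coord (Finsupp.single a 1 + Finsupp.single b 1) s) =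
      coeff (Finsupp.single a 1 + Finsupp.single b 1) (F.presentation s) := by
    simpa using (F.coeff_presentation (.inl hpa) (.inl hpb) 0 s).symm
  have htcoord : coeff 0 (F.coord (Finsupp.single a 1 + Finsupp.single b 1) t) = 1 := by
    rw [hcoord, ht, coeff_sub, coeff_X_mul_X, coeff_X_mul_X]
    simp [hpq]
  have hucoord : coeff 0 (F.coord (Finsupp.single a 1 + Finsupp.single b 1) u) = 0 := by
    rw [hcoord, hu, coeff_sub, coeff_X_mul_X, coeff_X_mul_X]
    simp [hpq, h.rotate.ne.symm, h.rotate.rotate.ne]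
  have hgpq : coeff (Finsupp.single p 1 + Finsupp.single q 1) g = -1 := by
    rw [coeff_sub, coeff_X_mul_X, coeff_X_mul_X]
    simp [hpq.1.symm, hpq.2.2.symm]
  refine ⟨f • u - g • t, ?_, ?_⟩
  · rw [map_sub, map_smul, map_smul, hu, ht, smul_eq_mul, smul_eq_mul, mul_comm, sub_self]
  · rw [map_sub, map_smul, map_smul, smul_eq_mul, smul_eq_mul, coeff_sub, mul_comm f, mul_comm g,
      coeff_mul_of_isHomogeneous (by simpa using hf),
      coeff_mul_of_isHomogeneous (by simpa using hg),
      htcoord, hucoord, hgpq, zero_mul, one_mul, sub_neg_eq_add, zero_add]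

theorem exists_deg_two_eq_four {p a b c q : L} [IsModularLattice L] (h : IsDiamond p a b c q)
    (hpa : p ⋖ a) : ∃ e, F.deg 2 e = 4 := by
  have hpc := h.bot_covBy_third hpa
  have hpb := h.rotate.rotate.bot_covBy_third hpc
  have hbq := h.second_covBy_top hpa
  have haq := h.rotate.rotate.second_covBy_top hpc
  obtain ⟨t, ht, hcoeff⟩ :=
    F.exists_presentation_eq_zero_and_coeff_coord_eq_one h hpa.wcovBy hpb.wcovBy
  obtain ⟨s, rfl⟩ := F.exists_d_one_eq joinMeetIdeal_le_ker_constantCoeff ht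
  obtain ⟨e, he⟩ : ∃ e, coeff (Finsupp.single p 1 + Finsupp.single q 1)
      (F.coord (Finsupp.single a 1 + Finsupp.single b 1) (F.d 1 (Finsupp.single e 1))) ≠ 0 := by
    by_contra! hzero
    refine one_ne_zero (hcoeff.symm.trans (coeff_map_eq_zero (φ := F.coord _ ∘ₗ F.d 1) ?_ s))
    intro e m hm
    rcases eq_add_or_eq_single_of_le hm with rfl | ⟨n, rfl | rfl⟩
    · exact hzero e
    · exact F.coeff_single_coord_d_one (.inl hpa.wcovBy) (.inl hpb.wcovBy) n _
    · exact F.coeff_single_coord_d_one (.inr haq.wcovBy) (.inr hbq.wcovBy) n _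
  obtain ⟨x, hx⟩ := F.exists_coeff_ne_zero_of_coeff_coord_ne_zero he
  refine ⟨e, ?_⟩
  rw [← F.homog 1 e x _ (mem_support_iff.2 hx), F.deg_one_joinMeetIdeal, mdeg_eq_degree]
  simp

end JoinMeetIdeal

end MinGradedFreeRes

/-- If `L` is a finite modular non-distributive lattice, then `β_{2,4}(S/I_L) > 0`; in
particular `I_L` (generated in degree `2`) is not linearly related, and hence it does not
have a linear resolution (some `β_{i,j}(S/I_L)` with `i ≥ 1` and `j ≠ i + 1` is nonzero). -/
theorem not_linearly_related_of_modular_nondistributive (K : Type*) [Field K]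
    (L : Type*) [Lattice L] [Fintype L] [IsModularLattice L]
    (hnd : ¬ ∀ x y z : L, x ⊓ (y ⊔ z) = (x ⊓ y) ⊔ (x ⊓ z)) :
    Nonempty (MinGradedFreeRes K L (joinMeetIdeal K L)) ∧
      ∀ F : MinGradedFreeRes K L (joinMeetIdeal K L),
        0 < F.betti 2 4 ∧ (∃ b : F.B 2, 4 ≤ F.deg 2 b) ∧
          ∃ i, 1 ≤ i ∧ ∃ b : F.B i, F.deg i b ≠ i + 1 := by
  refine ⟨exists_minGradedFreeRes _ homogeneousComponent_mem_joinMeetIdeal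
    joinMeetIdeal_le_ker_constantCoeff, fun F => ?_⟩
  obtain ⟨p, a, b, c, q, hdiamond, hpa⟩ := exists_covering_diamond hnd
  obtain ⟨e, he⟩ := F.exists_deg_two_eq_four hdiamond hpa
  have := F.finB 2
  have : Nonempty {b : F.B 2 // F.deg 2 b = 4} := ⟨e, he⟩
  exact ⟨Nat.card_pos, ⟨e, he.ge⟩, 2, one_le_two, e, by lia⟩
end
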